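/- arXiv:1611.00735 — 5 statements merged into one kernel-verified Lean document; each statement's English description precedes it below -/
import Mathlib

section
/- Let n ≥ 1 and let S ⊂ ℤⁿ be a finite set. Then n! · vol(conv(S)) is a nonnegative integer, i.e., there exists m ∈ ℕ with n! · vol(conv(S)) = m. Here conv denotes convex hull in ℝⁿ and vol denotes n-dimensional Lebesgue measure. -/
open MeasureTheory

/-!
Lift the points of the finite set `s` to the graph of a generic height function `h`. The lower
faces of the convex hull of the lifted points project to simplices with vertices in `s`. Almost
every point `x` of `conv s` is in general position: it lies on no lower-dimensional convex hull of
points of `s`. Among the affinely independent `τ ⊆ s` with `x ∈ conv τ`, take one whose affine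
interpolant of `h` has the least value at `x`. This interpolant lies below `h` on all of `s`, as
otherwise a pivot step of the simplex method would decrease its value at `x`. So `x` lies in the
projection of a lower face, and of only one, because distinct faces supported by `ℓ` and `ℓ'`
would yield both `ℓ x < ℓ' x` and `ℓ' x ≤ ℓ x`. The volume of `conv s` is therefore a sum of
volumes of full-dimensional simplices with vertices in `s`, and a lattice simplex has volume
`|det| / n!` with an integer determinant.
-/

section Affine

variable {𝕜 E : Type*} [Field 𝕜] [AddCommGroup E] [Module 𝕜 E]

theorem exists_sum_smul_eq_of_mem_affineSpan {σ : Finset E} {p : E}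
    (hp : p ∈ affineSpan 𝕜 (σ : Set E)) :
    ∃ w : E → 𝕜, ∑ y ∈ σ, w y = 1 ∧ ∑ y ∈ σ, w y • y = p := by
  classical
  obtain ⟨w, hw, rfl⟩ := eq_affineCombination_of_mem_affineSpan_of_fintype
    (p := ((↑) : σ → E)) (by simpa using hp)
  refine ⟨fun y => if hy : y ∈ σ then w ⟨y, hy⟩ else 0, ?_, ?_⟩
  · simpa [← Finset.sum_coe_sort σ] using hw
  · rw [Finset.affineCombination_eq_linear_combination _ _ _ hw, ← Finset.sum_coe_sort σ]
    simp

theorem exists_affineMap_eqOn {F : Type*} [AddCommGroup F] [Module 𝕜 F] {σ : Set E}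
    (hσ : AffineIndependent 𝕜 ((↑) : σ → E)) (h : E → F) : ∃ ℓ : E →ᵃ[𝕜] F, Set.EqOn ℓ h σ := by
  rcases σ.eq_empty_or_nonempty with rfl | ⟨p, hp⟩
  · exact ⟨0, Set.eqOn_empty _ _⟩
  have hlin : LinearIndepOn 𝕜 id ((· -ᵥ p) '' (σ \ {p})) :=
    (affineIndependent_set_iff_linearIndependent_vsub 𝕜 hp).1 hσ
  let b := Module.Basis.extend hlin
  let φ : E →ₗ[𝕜] F := b.constr 𝕜 fun v => h (v + p) - h p
  refine ⟨φ.toAffineMap.comp (AffineMap.id 𝕜 E - AffineMap.const 𝕜 E p) +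
    AffineMap.const 𝕜 E (h p), fun t ht => ?_⟩
  rcases eq_or_ne t p with rfl | htp
  · simp
  have hφ : φ (t - p) = h t - h p := by
    have hmem : t - p ∈ hlin.extend (Set.subset_univ _) :=
      hlin.subset_extend _ ⟨t, ⟨ht, htp⟩, rfl⟩
    simpa [b] using b.constr_basis 𝕜 (fun v => h (v + p) - h p) ⟨t - p, hmem⟩
  simp [← map_sub, hφ]

/-- The functions whose restriction to `σ` is the restriction of an affine function.
Generic height functions on `s` avoid these subspaces for the affinely dependent `σ ⊆ s`. -/
def affineOnSubmodule (𝕜 : Type*) {E : Type*} [Field 𝕜] [AddCommGroup E] [Module 𝕜 E]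
    (σ : Set E) : Submodule 𝕜 (E → 𝕜) where
  carrier := {h | ∃ ℓ : E →ᵃ[𝕜] 𝕜, Set.EqOn ℓ h σ}
  zero_mem' := ⟨0, fun _ _ => rfl⟩
  add_mem' := by
    rintro _ _ ⟨ℓ, hℓ⟩ ⟨ℓ', hℓ'⟩
    exact ⟨ℓ + ℓ', fun t ht => congrArg₂ (· + ·) (hℓ ht) (hℓ' ht)⟩
  smul_mem' := by
    rintro c _ ⟨ℓ, hℓ⟩
    exact ⟨c • ℓ, fun t ht => congrArg (c • ·) (hℓ ht)⟩

theorem affineIndependent_of_affineOnSubmodule_eq_top {σ : Set E}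
    (hσ : affineOnSubmodule 𝕜 σ = ⊤) : AffineIndependent 𝕜 ((↑) : σ → E) := by
  classical
  have hdual (t : σ) : ∃ ℓ : E →ᵃ[𝕜] 𝕜, Set.EqOn ℓ (Pi.single (t : E) 1) σ :=
    (hσ ▸ Submodule.mem_top : Pi.single (t : E) 1 ∈ affineOnSubmodule 𝕜 σ)
  choose ℓ hℓ using hdual
  have hcomp : AffineMap.pi ℓ ∘ (↑) = fun t : σ => (Pi.single t 1 : σ → 𝕜) := by
    ext t u
    simp [hℓ u t.2, Pi.single_apply, Subtype.ext_iff, eq_comm]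
  refine AffineIndependent.of_comp (AffineMap.pi ℓ) ?_
  rw [hcomp]
  exact (Pi.linearIndependent_single_one σ 𝕜).affineIndependent

/-- A height function on `s` is generic if the points of `s` at which it agrees with any given
affine function are affinely independent. The regular subdivision it induces is then a
triangulation. -/
def IsGenericHeight (h : E → 𝕜) (s : Finset E) : Prop :=
  ∀ σ ⊆ s, h ∈ affineOnSubmodule 𝕜 (σ : Set E) → AffineIndependent 𝕜 ((↑) : σ → E)

theorem exists_isGenericHeight (𝕜 : Type*) {E : Type*} [Field 𝕜] [Infinite 𝕜] [AddCommGroup E]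
    [Module 𝕜 E] (s : Finset E) : ∃ h : E → 𝕜, IsGenericHeight h s := by
  classical
  let dependent := s.powerset.filter fun σ : Finset E => ¬ AffineIndependent 𝕜 ((↑) : σ → E)
  have hproper : ⊤ ∉ dependent.image fun σ : Finset E => affineOnSubmodule 𝕜 (σ : Set E) := by
    simp only [Finset.mem_image, not_exists, not_and]
    exact fun σ hσ htop =>
      (Finset.mem_filter.1 hσ).2 (affineIndependent_of_affineOnSubmodule_eq_top htop)
  -- A vector space over an infinite field is not a finite union of proper subspaces.
  obtain ⟨h, hh⟩ := (Set.ne_univ_iff_exists_notMem _).1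
    (Subspace.biUnion_ne_univ_of_top_notMem hproper)
  refine ⟨h, fun σ hσ hmem => ?_⟩
  by_contra hdep
  exact hh (Set.mem_biUnion (Finset.mem_image_of_mem _
    (Finset.mem_filter.2 ⟨Finset.mem_powerset.2 hσ, hdep⟩)) hmem)

end Affine

section LowerFace

variable {𝕜 E : Type*} [Field 𝕜] [LinearOrder 𝕜] [AddCommGroup E] [Module 𝕜 E]
  {s σ τ : Finset E} {h : E → 𝕜} {p x : E}

/-- The projection to `E` of a (possibly empty) face of the lower convex hull of the lifted points
`(t, h t)`, `t ∈ s`, recorded as the set of all points of `s` whose lift lies on that face. -/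
def IsLowerFace (h : E → 𝕜) (s σ : Finset E) : Prop :=
  σ ⊆ s ∧ ∃ ℓ : E →ᵃ[𝕜] 𝕜, (∀ t ∈ s, ℓ t ≤ h t) ∧ ∀ t ∈ s, t ∈ σ ↔ ℓ t = h t

theorem IsLowerFace.affineIndependent (hσ : IsLowerFace h s σ) (hh : IsGenericHeight h s) :
    AffineIndependent 𝕜 ((↑) : σ → E) := by
  obtain ⟨hσs, ℓ, -, hℓ⟩ := hσ
  exact hh σ hσs ⟨ℓ, fun t ht => (hℓ t (hσs ht)).1 ht⟩

/-- The point `x` is in general position with respect to `s` if the convex hull of a subset of `s`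
contains `x` only when it is full-dimensional. In finite dimension this excludes only finitely many
proper affine subspaces. -/
def IsInGeneralPosition (𝕜 : Type*) {E : Type*} [Field 𝕜] [LinearOrder 𝕜] [AddCommGroup E]
    [Module 𝕜 E] (s : Finset E) (x : E) : Prop :=
  ∀ ρ ⊆ s, x ∈ convexHull 𝕜 (ρ : Set E) → affineSpan 𝕜 (ρ : Set E) = ⊤

theorem IsInGeneralPosition.notMem_convexHull_erase [DecidableEq E]
    (hgen : IsInGeneralPosition 𝕜 s x) (hσs : σ ⊆ s) (hσ : AffineIndependent 𝕜 ((↑) : σ → E))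
    {y : E} (hy : y ∈ σ) : x ∉ convexHull 𝕜 (σ.erase y : Set E) := by
  intro hx
  have hspan := hgen (σ.erase y) ((σ.erase_subset y).trans hσs) (by simpa using hx)
  have hmem : y ∈ affineSpan 𝕜 (σ.erase y : Set E) := hspan ▸ AffineSubspace.mem_top 𝕜 E y
  refine hσ.notMem_affineSpan_sdiff ⟨y, hy⟩ Set.univ ?_
  convert hmem
  ext z
  simp [and_comm]

variable [IsStrictOrderedRing 𝕜]

theorem affineMap_nonneg_of_mem_convexHull {A : Set E} {d : E →ᵃ[𝕜] 𝕜} (hA : ∀ t ∈ A, 0 ≤ d t)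
    (hx : x ∈ convexHull 𝕜 A) : 0 ≤ d x :=
  convexHull_min (t := d ⁻¹' Set.Ici 0) hA ((convex_Ici 0).affine_preimage d) hx

theorem affineMap_pos_of_mem_convexHull_insert {A : Set E} {d : E →ᵃ[𝕜] 𝕜} {y : E}
    (hA : ∀ t ∈ A, 0 ≤ d t) (hy : 0 < d y) (hx : x ∈ convexHull 𝕜 (insert y A))
    (hxA : x ∉ convexHull 𝕜 A) : 0 < d x := by
  rcases A.eq_empty_or_nonempty with rfl | hne
  · obtain rfl : x = y := by simpa using hx
    exact hy
  rw [convexHull_insert hne, convexJoin_singleton_left] at hx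
  obtain ⟨z, hz, a, b, ha, hb, hab, rfl⟩ := Set.mem_iUnion₂.1 hx
  have ha0 : a ≠ 0 := by
    rintro rfl
    obtain rfl : b = 1 := by simpa using hab
    exact hxA (by simpa using hz)
  rw [Convex.combo_affine_apply hab]
  exact add_pos_of_pos_of_nonneg (smul_pos (ha.lt_of_ne' ha0) hy)
    (smul_nonneg hb (affineMap_nonneg_of_mem_convexHull hA hz))

-- The ratio test of the simplex method: `θ` is the minimum of `w i / μ i` over positive `μ i`.
theorem exists_nonneg_mul_eq_forall_mul_le {ι : Type*} {I : Finset ι} {w μ : ι → 𝕜}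
    (hw : ∀ i ∈ I, 0 ≤ w i) (hμ : ∃ i ∈ I, 0 < μ i) :
    ∃ θ, 0 ≤ θ ∧ (∃ t ∈ I, w t = θ * μ t) ∧ ∀ i ∈ I, θ * μ i ≤ w i := by
  obtain ⟨t, ht, hmin⟩ := (I.filter (0 < μ ·)).exists_min_image (fun i => w i / μ i)
    (by simpa [Finset.Nonempty] using hμ)
  obtain ⟨htI, hμt⟩ := Finset.mem_filter.1 ht
  have hθ : 0 ≤ w t / μ t := div_nonneg (hw t htI) hμt.le
  refine ⟨w t / μ t, hθ, ⟨t, htI, (div_mul_cancel₀ _ hμt.ne').symm⟩, fun i hi => ?_⟩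
  rcases le_or_gt (μ i) 0 with hμi | hμi
  · exact (mul_nonpos_of_nonneg_of_nonpos hθ hμi).trans (hw i hi)
  · exact (le_div_iff₀ hμi).1 (hmin i (Finset.mem_filter.2 ⟨hi, hμi⟩))

theorem exists_mem_convexHull_insert_erase [DecidableEq E] (hp : p ∈ affineSpan 𝕜 (τ : Set E))
    (hx : x ∈ convexHull 𝕜 (τ : Set E)) :
    ∃ t ∈ τ, x ∈ convexHull 𝕜 (insert p (τ.erase t) : Finset E) := by
  by_cases hpτ : p ∈ τ
  · exact ⟨p, hpτ, by rwa [Finset.insert_erase hpτ]⟩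
  obtain ⟨w, hw0, hw1, hwx⟩ := Finset.mem_convexHull'.1 hx
  obtain ⟨μ, hμ1, hμp⟩ := exists_sum_smul_eq_of_mem_affineSpan hp
  have hμpos : ∃ y ∈ τ, 0 < μ y := Finset.exists_lt_of_sum_lt (f := 0) (by simp [hμ1])
  -- In `x = ∑ w y • y`, trade the part `θ • ∑ μ y • y` for `θ • p`.
  obtain ⟨θ, hθ, ⟨t, htτ, hwt⟩, hle⟩ := exists_nonneg_mul_eq_forall_mul_le hw0 hμpos
  have hvanish : w t - θ * μ t = 0 := sub_eq_zero.2 hwt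
  have hsum : ∑ y ∈ τ.erase t, (w y - θ * μ y) = 1 - θ := by
    rw [Finset.sum_erase (f := fun y => w y - θ * μ y) _ hvanish, Finset.sum_sub_distrib,
      ← Finset.mul_sum, hw1, hμ1, mul_one]
  have hsmul : ∑ y ∈ τ.erase t, (w y - θ * μ y) • y = x - θ • p := by
    rw [Finset.sum_erase _ (by rw [hvanish, zero_smul])]
    simp_rw [sub_smul, mul_smul]
    rw [Finset.sum_sub_distrib, ← Finset.smul_sum, hwx, hμp]
  have hne : ∀ y ∈ τ.erase t, y ≠ p := fun y hy hyp => hpτ (hyp ▸ Finset.mem_of_mem_erase hy)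
  have hpe : p ∉ τ.erase t := fun hpe => hne p hpe rfl
  refine ⟨t, htτ, Finset.mem_convexHull'.2
    ⟨Function.update (fun y => w y - θ * μ y) p θ, ?_, ?_, ?_⟩⟩
  · intro y hy
    rcases Finset.mem_insert.1 hy with rfl | hy
    · simpa
    · simpa [hne y hy] using hle y (Finset.mem_of_mem_erase hy)
  · rw [Finset.sum_insert hpe, Finset.sum_update_of_notMem hpe, hsum]
    simp
  · rw [Finset.sum_insert hpe, Finset.sum_congr rfl fun y hy => by
      rw [Function.update_of_ne (hne y hy)], hsmul]
    simp

theorem IsInGeneralPosition.affineMap_lt (hgen : IsInGeneralPosition 𝕜 s x)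
    (hσs : σ ⊆ s) (hσ : AffineIndependent 𝕜 ((↑) : σ → E)) (hx : x ∈ convexHull 𝕜 (σ : Set E))
    {f g : E →ᵃ[𝕜] 𝕜} (hle : ∀ t ∈ σ, f t ≤ g t) {y : E} (hy : y ∈ σ) (hlt : f y < g y) :
    f x < g x := by
  classical
  have hpos := affineMap_pos_of_mem_convexHull_insert (d := g - f) (A := σ.erase y)
    (fun t ht => sub_nonneg.2 (hle t (Finset.mem_of_mem_erase ht))) (sub_pos.2 hlt)
    (by rwa [← Finset.coe_insert, Finset.insert_erase hy])
    (hgen.notMem_convexHull_erase hσs hσ hy)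
  exact sub_pos.1 hpos

theorem exists_affineIndependent_mem_convexHull (hx : x ∈ convexHull 𝕜 (s : Set E)) :
    ∃ σ ⊆ s, AffineIndependent 𝕜 ((↑) : σ → E) ∧ x ∈ convexHull 𝕜 (σ : Set E) := by
  rw [convexHull_eq_union] at hx
  simp only [Set.mem_iUnion, Finset.coe_subset] at hx
  obtain ⟨σ, hσs, hσ, hxσ⟩ := hx
  exact ⟨σ, hσs, hσ, hxσ⟩

theorem IsInGeneralPosition.exists_affineIndependent_affineMap_lt (hgen : IsInGeneralPosition 𝕜 s x)
    (hτs : τ ⊆ s) (hτ : AffineIndependent 𝕜 ((↑) : τ → E)) (hxτ : x ∈ convexHull 𝕜 (τ : Set E))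
    {ℓ : E →ᵃ[𝕜] 𝕜} (hℓ : Set.EqOn ℓ h τ) (hp : p ∈ s) (hlt : h p < ℓ p) :
    ∃ ρ ⊆ s, AffineIndependent 𝕜 ((↑) : ρ → E) ∧ x ∈ convexHull 𝕜 (ρ : Set E) ∧
      ∀ ℓ' : E →ᵃ[𝕜] 𝕜, Set.EqOn ℓ' h ρ → ℓ' x < ℓ x := by
  classical
  have hpspan : p ∈ affineSpan 𝕜 (τ : Set E) := hgen τ hτs hxτ ▸ AffineSubspace.mem_top 𝕜 E p
  obtain ⟨t, ht, hxt⟩ := exists_mem_convexHull_insert_erase hpspan hxτ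
  obtain ⟨ρ, hρ, hρind, hxρ⟩ := exists_affineIndependent_mem_convexHull hxt
  have hρs : ρ ⊆ s := hρ.trans (Finset.insert_subset hp ((τ.erase_subset t).trans hτs))
  have hpρ : p ∈ ρ := by
    by_contra hpρ
    refine hgen.notMem_convexHull_erase hτs hτ ht (convexHull_mono ?_ hxρ)
    exact_mod_cast (Finset.subset_insert_iff_of_notMem hpρ).1 hρ
  refine ⟨ρ, hρs, hρind, hxρ, fun ℓ' hℓ' => ?_⟩
  have hle : ∀ y ∈ ρ, ℓ' y ≤ ℓ y := fun y hy => by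
    rw [hℓ' hy]
    rcases Finset.mem_insert.1 (hρ hy) with rfl | hyτ
    · exact hlt.le
    · exact (hℓ (Finset.mem_of_mem_erase hyτ)).ge
  exact hgen.affineMap_lt hρs hρind hxρ hle hpρ ((hℓ' hpρ).trans_lt hlt)

theorem IsInGeneralPosition.exists_supporting_affineMap (hgen : IsInGeneralPosition 𝕜 s x)
    (hx : x ∈ convexHull 𝕜 (s : Set E)) (h : E → 𝕜) :
    ∃ τ ⊆ s, x ∈ convexHull 𝕜 (τ : Set E) ∧
      ∃ ℓ : E →ᵃ[𝕜] 𝕜, Set.EqOn ℓ h τ ∧ ∀ t ∈ s, ℓ t ≤ h t := by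
  classical
  let simplices := s.powerset.filter fun τ : Finset E =>
    AffineIndependent 𝕜 ((↑) : τ → E) ∧ x ∈ convexHull 𝕜 (τ : Set E)
  have hmem {τ : Finset E} : τ ∈ simplices ↔
      τ ⊆ s ∧ AffineIndependent 𝕜 ((↑) : τ → E) ∧ x ∈ convexHull 𝕜 (τ : Set E) := by
    simp [simplices]
  have hne : simplices.Nonempty :=
    (exists_affineIndependent_mem_convexHull hx).imp fun τ hτ => hmem.2 hτ
  have hinterp : ∀ τ ∈ simplices, ∃ ℓ : E →ᵃ[𝕜] 𝕜, Set.EqOn ℓ h τ :=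
    fun τ hτ => exists_affineMap_eqOn (hmem.1 hτ).2.1 h
  choose! ℓ hℓ using hinterp
  obtain ⟨τ, hτ, hmin⟩ := simplices.exists_min_image (fun τ => ℓ τ x) hne
  obtain ⟨hτs, hτind, hxτ⟩ := hmem.1 hτ
  refine ⟨τ, hτs, hxτ, ℓ τ, hℓ τ hτ, fun p hp => not_lt.1 fun hlt => ?_⟩
  obtain ⟨ρ, hρs, hρind, hxρ, hρlt⟩ :=
    hgen.exists_affineIndependent_affineMap_lt hτs hτind hxτ (hℓ τ hτ) hp hlt
  have hρ : ρ ∈ simplices := hmem.2 ⟨hρs, hρind, hxρ⟩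
  exact (hρlt _ (hℓ ρ hρ)).not_ge (hmin ρ hρ)

theorem IsInGeneralPosition.exists_isLowerFace (hgen : IsInGeneralPosition 𝕜 s x)
    (hx : x ∈ convexHull 𝕜 (s : Set E)) (h : E → 𝕜) :
    ∃ σ, IsLowerFace h s σ ∧ x ∈ convexHull 𝕜 (σ : Set E) := by
  classical
  obtain ⟨τ, hτs, hxτ, ℓ, hℓτ, hℓs⟩ := hgen.exists_supporting_affineMap hx h
  refine ⟨s.filter fun t => ℓ t = h t, ⟨s.filter_subset _, ℓ, hℓs, ?_⟩, convexHull_mono ?_ hxτ⟩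
  · intro t ht
    simp [ht]
  · intro t ht
    simpa using ⟨hτs ht, hℓτ ht⟩

theorem IsLowerFace.subset_of_mem_convexHull (hσ : IsLowerFace h s σ) (hτ : IsLowerFace h s τ)
    (hh : IsGenericHeight h s) (hgen : IsInGeneralPosition 𝕜 s x)
    (hxσ : x ∈ convexHull 𝕜 (σ : Set E)) (hxτ : x ∈ convexHull 𝕜 (τ : Set E)) : σ ⊆ τ := by
  have hind := hσ.affineIndependent hh
  obtain ⟨hσs, ℓσ, hℓσs, hℓσ⟩ := hσ
  obtain ⟨hτs, ℓτ, hℓτs, hℓτ⟩ := hτ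
  intro t ht
  by_contra htτ
  have hle : ∀ y ∈ σ, ℓτ y ≤ ℓσ y := fun y hy =>
    (hℓτs y (hσs hy)).trans ((hℓσ y (hσs hy)).1 hy).ge
  have hlt : ℓτ t < ℓσ t :=
    ((hℓτs t (hσs ht)).lt_of_ne (mt (hℓτ t (hσs ht)).2 htτ)).trans_eq ((hℓσ t (hσs ht)).1 ht).symm
  have hge : 0 ≤ (ℓτ - ℓσ) x := affineMap_nonneg_of_mem_convexHull (fun y hy =>
    sub_nonneg.2 ((hℓσs y (hτs hy)).trans ((hℓτ y (hτs hy)).1 hy).ge)) hxτ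
  exact (hgen.affineMap_lt hσs hind hxσ hle ht hlt).not_ge (sub_nonneg.1 hge)

end LowerFace

section Triangulation

variable {E : Type*} [NormedAddCommGroup E] [NormedSpace ℝ E] [FiniteDimensional ℝ E]
  [MeasurableSpace E] [BorelSpace E] (μ : Measure E) [μ.IsAddHaarMeasure] (s : Finset E)

theorem ae_isInGeneralPosition : ∀ᵐ x ∂μ, IsInGeneralPosition ℝ s x := by
  have hnull : ∀ ρ ∈ s.powerset,
      ∀ᵐ x ∂μ, x ∈ convexHull ℝ (ρ : Set E) → affineSpan ℝ (ρ : Set E) = ⊤ := fun ρ _ => by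
    by_cases hρ : affineSpan ℝ (ρ : Set E) = ⊤
    · exact .of_forall fun _ _ => hρ
    · filter_upwards [measure_eq_zero_iff_ae_notMem.1 (Measure.addHaar_affineSubspace μ _ hρ)]
        with x hx hxρ
      exact absurd (convexHull_subset_affineSpan _ hxρ) hx
  filter_upwards [(ae_ball_iff s.powerset.countable_toSet).2 hnull] with x hx ρ hρ
  exact hx ρ (Finset.mem_powerset.2 hρ)

variable {s} in
theorem IsLowerFace.aedisjoint_convexHull {h : E → ℝ} {σ τ : Finset E} (hσ : IsLowerFace h s σ)
    (hτ : IsLowerFace h s τ) (hh : IsGenericHeight h s) (hne : σ ≠ τ) :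
    AEDisjoint μ (convexHull ℝ (σ : Set E)) (convexHull ℝ (τ : Set E)) := by
  refine measure_eq_zero_iff_ae_notMem.2 ?_
  filter_upwards [ae_isInGeneralPosition μ s] with x hgen hx
  exact hne ((hσ.subset_of_mem_convexHull hτ hh hgen hx.1 hx.2).antisymm
    (hτ.subset_of_mem_convexHull hσ hh hgen hx.2 hx.1))

theorem exists_measure_convexHull_eq_sum :
    ∃ T : Finset (Finset E), (∀ σ ∈ T, σ ⊆ s ∧ σ.card = Module.finrank ℝ E + 1) ∧
      μ (convexHull ℝ (s : Set E)) = ∑ σ ∈ T, μ (convexHull ℝ (σ : Set E)) := by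
  classical
  obtain ⟨h, hh⟩ := exists_isGenericHeight ℝ s
  let T := s.powerset.filter fun σ : Finset E =>
    IsLowerFace h s σ ∧ affineSpan ℝ (σ : Set E) = ⊤
  have hT {σ : Finset E} : σ ∈ T ↔ IsLowerFace h s σ ∧ affineSpan ℝ (σ : Set E) = ⊤ := by
    simp only [T, Finset.mem_filter, Finset.mem_powerset, and_iff_right_iff_imp]
    exact fun hσ => hσ.1.1
  refine ⟨T, fun σ hσ => ?_, ?_⟩
  · obtain ⟨hface, hspan⟩ := hT.1 hσ
    have hcard := (hface.affineIndependent hh).affineSpan_eq_top_iff_card_eq_finrank_add_one.1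
      (by simpa using hspan)
    exact ⟨hface.1, by simpa using hcard⟩
  have hcover : convexHull ℝ (s : Set E) =ᵐ[μ] ⋃ σ ∈ T, convexHull ℝ (σ : Set E) := by
    filter_upwards [ae_isInGeneralPosition μ s] with x hgen
    refine propext ⟨fun hx => ?_, fun hx => ?_⟩
    · obtain ⟨σ, hσ, hxσ⟩ := hgen.exists_isLowerFace hx h
      exact Set.mem_biUnion (hT.2 ⟨hσ, hgen σ hσ.1 hxσ⟩) hxσ
    · obtain ⟨σ, hσ, hxσ⟩ := Set.mem_iUnion₂.1 hx
      exact convexHull_mono (hT.1 hσ).1.1 hxσ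
  have hdisj : (T : Set (Finset E)).Pairwise
      (Function.onFun (AEDisjoint μ) fun σ => convexHull ℝ (σ : Set E)) :=
    fun σ hσ τ hτ hne => (hT.1 hσ).1.aedisjoint_convexHull μ (hT.1 hτ).1 hh hne
  rw [measure_congr hcover, measure_biUnion_finset₀ hdisj fun σ _ =>
    (σ.finite_toSet.isClosed_convexHull ℝ).measurableSet.nullMeasurableSet]

end Triangulation

section CornerSimplex

/-- The corner simplex of size `r`: the points of the nonnegative orthant with coordinate sum at
most `r`. Scaling is built in so that its slices are again corner simplices. -/
def cornerSimplex (n : ℕ) (r : ℝ) : Set (Fin n → ℝ) := {x | (∀ i, 0 ≤ x i) ∧ ∑ i, x i ≤ r}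

theorem measurableSet_cornerSimplex (n : ℕ) (r : ℝ) : MeasurableSet (cornerSimplex n r) := by
  unfold cornerSimplex
  measurability

theorem nonneg_of_mem_cornerSimplex {n : ℕ} {r : ℝ} {x : Fin n → ℝ} (hx : x ∈ cornerSimplex n r) :
    0 ≤ r :=
  (Finset.sum_nonneg fun i _ => hx.1 i).trans hx.2

theorem cons_mem_cornerSimplex_iff {n : ℕ} {r t : ℝ} {y : Fin n → ℝ} :
    (Fin.cons t y : Fin (n + 1) → ℝ) ∈ cornerSimplex (n + 1) r ↔
      0 ≤ t ∧ y ∈ cornerSimplex n (r - t) := by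
  simp [cornerSimplex, Fin.forall_fin_succ, Fin.sum_univ_succ, le_sub_iff_add_le', and_assoc]

theorem volume_cornerSimplex_succ (n : ℕ) (r : ℝ) :
    volume (cornerSimplex (n + 1) r) = ∫⁻ t in Set.Icc 0 r, volume (cornerSimplex n (r - t)) := by
  have hmp := (volume_preserving_piFinSuccAbove (fun _ : Fin (n + 1) => ℝ) 0).symm
  have hmeas := measurableSet_cornerSimplex (n + 1) r
  rw [← hmp.measure_preimage hmeas.nullMeasurableSet, Measure.volume_eq_prod,
    Measure.prod_apply (hmeas.preimage hmp.measurable), ← lintegral_indicator measurableSet_Icc]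
  refine lintegral_congr fun t => ?_
  have hslice : Prod.mk t ⁻¹' ((MeasurableEquiv.piFinSuccAbove
      (fun _ : Fin (n + 1) => ℝ) 0).symm ⁻¹' cornerSimplex (n + 1) r) =
      {y | 0 ≤ t ∧ y ∈ cornerSimplex n (r - t)} := by
    ext y
    simpa [Fin.insertNthEquiv] using cons_mem_cornerSimplex_iff
  rw [hslice]
  by_cases ht : t ∈ Set.Icc 0 r
  · simp [ht, ht.1]
  · have hempty : {y | 0 ≤ t ∧ y ∈ cornerSimplex n (r - t)} = ∅ :=
      Set.eq_empty_of_forall_notMem fun y hy =>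
        ht ⟨hy.1, sub_nonneg.1 (nonneg_of_mem_cornerSimplex hy.2)⟩
    rw [Set.indicator_of_notMem ht, hempty, measure_empty]

theorem integral_sub_pow_div_factorial (n : ℕ) (r : ℝ) :
    ∫ t in (0 : ℝ)..r, (r - t) ^ n / n.factorial = r ^ (n + 1) / (n + 1).factorial := by
  rw [intervalIntegral.integral_comp_sub_left (fun u => u ^ n / n.factorial), sub_self, sub_zero,
    intervalIntegral.integral_div, integral_pow, zero_pow n.succ_ne_zero, sub_zero, div_div,
    Nat.factorial_succ]
  push_cast
  rfl

theorem volume_cornerSimplex (n : ℕ) {r : ℝ} (hr : 0 ≤ r) :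
    volume (cornerSimplex n r) = ENNReal.ofReal (r ^ n / n.factorial) := by
  induction n generalizing r with
  | zero =>
    have huniv : cornerSimplex 0 r = Set.univ := by simp [cornerSimplex, hr]
    simp [huniv, volume_pi]
  | succ n ih =>
    have hnonneg : 0 ≤ᵐ[volume.restrict (Set.Icc 0 r)]
        fun t => (r - t) ^ n / (n.factorial : ℝ) := by
      filter_upwards [ae_restrict_mem measurableSet_Icc] with t ht
      have := sub_nonneg.2 ht.2
      positivity
    rw [volume_cornerSimplex_succ,
      setLIntegral_congr_fun measurableSet_Icc fun t ht => ih (sub_nonneg.2 ht.2),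
      ← ofReal_integral_eq_lintegral_ofReal (Continuous.integrableOn_Icc (by fun_prop)) hnonneg,
      integral_Icc_eq_integral_Ioc, ← intervalIntegral.integral_of_le hr,
      integral_sub_pow_div_factorial]

theorem cornerSimplex_one_eq_convexHull (n : ℕ) :
    cornerSimplex n 1 =
      convexHull ℝ (insert 0 (Set.range fun i => (Pi.single i 1 : Fin n → ℝ))) := by
  have hrange : insert 0 (Set.range fun i => (Pi.single i 1 : Fin n → ℝ)) =
      (LinearMap.funLeft ℝ ℝ Fin.succ) ''
        Set.range fun i => (Pi.single i 1 : Fin (n + 1) → ℝ) := by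
    have hzero : LinearMap.funLeft ℝ ℝ Fin.succ (Pi.single 0 1 : Fin (n + 1) → ℝ) = 0 := by
      ext j
      simp
    have hsucc (i : Fin n) : LinearMap.funLeft ℝ ℝ Fin.succ (Pi.single i.succ 1) =
        (Pi.single i 1 : Fin n → ℝ) := by
      ext j
      simp [Pi.single_apply]
    rw [Fin.range_fin_succ, Set.image_insert_eq, ← Set.range_comp, hzero]
    simp_rw [← hsucc]
    rfl
  rw [hrange, ← LinearMap.image_convexHull, convexHull_rangle_single_eq_stdSimplex]
  ext x
  constructor
  · rintro ⟨hx0, hx1⟩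
    refine ⟨Fin.cons (1 - ∑ i, x i) x, ⟨?_, ?_⟩, ?_⟩
    · simp [Fin.forall_fin_succ, hx0, hx1]
    · simp [Fin.sum_univ_succ]
    · ext i
      simp
  · rintro ⟨w, ⟨hw0, hw1⟩, rfl⟩
    rw [Fin.sum_univ_succ] at hw1
    exact ⟨fun i => hw0 i.succ, (le_add_of_nonneg_left (hw0 0)).trans_eq hw1⟩

theorem convexHull_range_eq_image_cornerSimplex {n : ℕ} {E : Type*} [AddCommGroup E] [Module ℝ E]
    (v : Fin (n + 1) → E) :
    convexHull ℝ (Set.range v) = (v 0 + ·) ''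
      (Fintype.linearCombination ℝ (fun j : Fin n => v j.succ - v 0) '' cornerSimplex n 1) := by
  have hrange : Set.range v = (v 0 +ᵥ ·) ''
      (Fintype.linearCombination ℝ (fun j => v j.succ - v 0) ''
        insert 0 (Set.range fun j => (Pi.single j 1 : Fin n → ℝ))) := by
    rw [Fin.range_fin_succ, Set.image_insert_eq, Set.image_insert_eq, ← Set.range_comp,
      ← Set.range_comp]
    simp [Function.comp_def, Fin.tail_def]
  rw [hrange, cornerSimplex_one_eq_convexHull, LinearMap.image_convexHull]
  exact convexHull_vadd _ _

theorem volume_convexHull_range {n : ℕ} (v : Fin (n + 1) → Fin n → ℝ) :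
    volume (convexHull ℝ (Set.range v)) = ENNReal.ofReal
      (|(Matrix.of fun i j : Fin n => v i.succ j - v 0 j).det| / n.factorial) := by
  have hdet : LinearMap.det (Fintype.linearCombination ℝ fun j => v j.succ - v 0) =
      (Matrix.of fun i j : Fin n => v i.succ j - v 0 j).det := by
    rw [← LinearMap.det_toMatrix', ← Matrix.det_transpose]
    congr 1
    ext i j
    simp [LinearMap.toMatrix'_apply]
  rw [convexHull_range_eq_image_cornerSimplex, Set.image_add_left, measure_preimage_add,
    Measure.addHaar_image_linearMap, volume_cornerSimplex n zero_le_one, hdet,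
    ← ENNReal.ofReal_mul (abs_nonneg _), one_pow, mul_one_div]

end CornerSimplex

section LatticeSimplex

theorem exists_factorial_mul_volume_convexHull_range_intCast_eq {n : ℕ}
    (z : Fin (n + 1) → Fin n → ℤ) :
    ∃ m : ℕ, (n.factorial : ℝ) *
      (volume (convexHull ℝ (Set.range fun k i => (z k i : ℝ)))).toReal = m := by
  let M := Matrix.of fun i j : Fin n => z i.succ j - z 0 j
  have hdet : (Matrix.of fun i j : Fin n => (z i.succ j : ℝ) - z 0 j).det = (M.det : ℤ) := by
    rw [Int.cast_det]
    congr 1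
    ext i j
    simp [M]
  refine ⟨M.det.natAbs, ?_⟩
  rw [volume_convexHull_range, ENNReal.toReal_ofReal (by positivity), hdet,
    mul_div_cancel₀ _ (by positivity), Nat.cast_natAbs, Int.cast_abs]

theorem exists_factorial_mul_volume_convexHull_eq_of_card {n : ℕ} {σ : Finset (Fin n → ℝ)}
    (hσ : (σ : Set (Fin n → ℝ)) ⊆ Set.range fun (z : Fin n → ℤ) i => (z i : ℝ))
    (hcard : σ.card = n + 1) :
    ∃ m : ℕ, (n.factorial : ℝ) * (volume (convexHull ℝ (σ : Set (Fin n → ℝ)))).toReal = m := by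
  let e := σ.equivFinOfCardEq hcard
  have hlattice (k : Fin (n + 1)) : ∃ z : Fin n → ℤ, (fun i => (z i : ℝ)) = e.symm k :=
    hσ (e.symm k).2
  choose z hz using hlattice
  have hrange : (Set.range fun k i => (z k i : ℝ)) = σ := by
    rw [show (fun k i => (z k i : ℝ)) = (↑) ∘ e.symm from funext hz]
    exact (e.symm.surjective.range_comp _).trans Subtype.range_coe
  rw [← hrange]
  exact exists_factorial_mul_volume_convexHull_range_intCast_eq z

end LatticeSimplex

/-- The normalized volume `n! · vol(conv S)` of a lattice polytope is a nonnegative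
integer. -/
theorem normalized_volume_lattice_polytope_integer (n : ℕ) (hn : 1 ≤ n)
    (S : Set (Fin n → ℤ)) (hS : S.Finite) :
    ∃ m : ℕ,
      (Nat.factorial n : ℝ) *
        (volume (convexHull ℝ
          ((fun x : Fin n → ℤ => (fun i => (x i : ℝ))) '' S))).toReal = m := by
  obtain ⟨s, hs⟩ := (hS.image fun x : Fin n → ℤ => (fun i => (x i : ℝ))).exists_finset_coe
  obtain ⟨T, hT, hvol⟩ := exists_measure_convexHull_eq_sum volume s
  have hint : ∀ σ ∈ T, ∃ m : ℕ, (Nat.factorial n : ℝ) *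
      (volume (convexHull ℝ (σ : Set (Fin n → ℝ)))).toReal = m := fun σ hσ => by
    obtain ⟨hσs, hcard⟩ := hT σ hσ
    rw [Module.finrank_fin_fun] at hcard
    have hlattice := ((Finset.coe_subset.2 hσs).trans_eq hs).trans (Set.image_subset_range _ S)
    exact exists_factorial_mul_volume_convexHull_eq_of_card hlattice hcard
  choose! m hm using hint
  refine ⟨∑ σ ∈ T, m σ, ?_⟩
  rw [← hs, hvol, ENNReal.toReal_sum, Finset.mul_sum, Nat.cast_sum, Finset.sum_congr rfl hm]
  exact fun σ _ => (σ.finite_toSet.isCompact_convexHull ℝ).measure_ne_top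
end

section
/- Let n ≥ 1 and V > 0. Consider the collection of all polytopes P = conv(S) ⊂ ℝⁿ where S ⊂ ℤⁿ is finite, the interior of P is nonempty, and vol(P) ≤ V. Call two such polytopes P, P′ equivalent if there exist a matrix A ∈ GL(n,ℤ) (an integer matrix with determinant ±1) and t ∈ ℤⁿ such that P′ = {Ax + t : x ∈ P}. Then this collection contains only finitely many equivalence classes; i.e., there exists a finite family of such polytopes such that every polytope in the collection is equivalent to one in the family. -/
open MeasureTheory

/-- `P` is a full-dimensional integral polytope in `ℝⁿ` with volume at most `V`. -/
def IsBoundedLatticePolytope (n : ℕ) (V : ℝ) (P : Set (Fin n → ℝ)) : Prop :=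
  (∃ S : Set (Fin n → ℤ), S.Finite ∧
      P = convexHull ℝ ((fun x : Fin n → ℤ => (fun i => (x i : ℝ))) '' S)) ∧
    (interior P).Nonempty ∧ (volume P).toReal ≤ V

/-- `P` and `Q` are equivalent under the group `Aff(n,ℤ)` of integral affine
transformations `x ↦ Ax + t` with `A` an integer matrix of determinant `±1`. -/
def AffZEquiv (n : ℕ) (P Q : Set (Fin n → ℝ)) : Prop :=
  ∃ (A : Matrix (Fin n) (Fin n) ℤ) (t : Fin n → ℤ),
    (A.det = 1 ∨ A.det = -1) ∧
    Q = (fun x : Fin n → ℝ => (fun i => (∑ j, (A i j : ℝ) * x j) + (t i : ℝ))) '' P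

/-!
Let `P` be the convex hull of `S ⊆ ℤⁿ`. Fix `v ∈ S` and points of `S` whose edge vectors from `v`
are the columns of a matrix `M` with `det M ≠ 0`. By Cramer's rule the entries of `adj M (x - v)`,
for `x ∈ S`, are again determinants of simplices in `P`, and such determinants are at most
`nⁿ vol P`, since a simplex contains an affine copy of the cube `[0, 1/n]ⁿ`. So `det M`, the residue
of `M` modulo `det M` and the set of vectors `adj M (x - v)` take finitely many values. They
determine `P` up to equivalence: `det N = det M` and `N ≡ M` modulo `det M` force `N = A M` with
`det A = 1`, and then `adj N A = adj M`, so `A` matches the coordinates with respect to `M` with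
those with respect to `N`.
-/

open Matrix Module
open scoped nonZeroDivisors

theorem exists_finset_representatives_of_finite_image {α β : Type*} {s : Set α} {r : α → α → Prop}
    (f : α → β) (hf : (f '' s).Finite) (hr : ∀ a ∈ s, ∀ b ∈ s, f a = f b → r a b) :
    ∃ F : Finset α, ↑F ⊆ s ∧ ∀ a ∈ s, ∃ b ∈ F, r a b := by
  classical
  obtain ⟨F, hFs, hF⟩ := Finset.subset_set_image_iff.mp hf.coe_toFinset.subset
  refine ⟨F, hFs, fun a ha => ?_⟩
  obtain ⟨b, hb, hba⟩ : ∃ b ∈ F, f b = f a := by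
    rw [← Finset.mem_image, hF, hf.mem_toFinset]
    exact Set.mem_image_of_mem f ha
  exact ⟨b, hb, hr a ha b (hFs hb) hba.symm⟩

/-- The matrix whose columns are the edge vectors from `v` to the points `w j`; up to sign, its
determinant is `(card ι)!` times the volume of the simplex with these vertices. -/
def edgeMatrix {ι R : Type*} [Sub R] (v : ι → R) (w : ι → ι → R) : Matrix ι ι R :=
  of fun i j => w j i - v i

section Matrices

variable {ι R : Type*} [Fintype ι] [DecidableEq ι] [CommRing R]

theorem exists_det_eq_one_mul_eq_of_det_dvd_sub {M N : Matrix ι ι R} (hM : M.det ∈ R⁰)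
    (hdet : N.det = M.det) (hdvd : ∀ i j, M.det ∣ N i j - M i j) :
    ∃ A : Matrix ι ι R, A.det = 1 ∧ A * M = N := by
  choose K hK using hdvd
  have hmul : (1 + of K * M.adjugate) * M = N := by
    have hsub : M.det • of K = N - M := by
      ext i j
      exact (hK i j).symm
    rw [add_mul, one_mul, mul_assoc, adjugate_mul, mul_smul_one, hsub, add_sub_cancel]
  refine ⟨1 + of K * M.adjugate, ?_, hmul⟩
  apply (mul_cancel_right_mem_nonZeroDivisors hM).mp
  rw [one_mul, ← det_mul, hmul, hdet]

theorem adjugate_mul_mulVec_mulVec (A M : Matrix ι ι R) (x : ι → R) :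
    (A * M).adjugate *ᵥ (A *ᵥ x) = A.det • (M.adjugate *ᵥ x) := by
  rw [mulVec_mulVec, adjugate_mul_distrib, mul_assoc, adjugate_mul, mul_smul_one, smul_mulVec]

theorem adjugate_mulVec_injective {M : Matrix ι ι R} (hM : M.det ∈ R⁰) :
    Function.Injective (M.adjugate *ᵥ ·) := by
  apply mulVec_injective_of_det_mem_nonZeroDivisors
  rw [det_adjugate]
  exact pow_mem hM _

theorem adjugate_edgeMatrix_mulVec_sub_apply (v : ι → R) (w : ι → ι → R) (x : ι → R) (i : ι) :
    ((edgeMatrix v w).adjugate *ᵥ (x - v)) i = (edgeMatrix v (Function.update w i x)).det := by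
  rw [← cramer_eq_adjugate_mulVec, cramer_apply]
  congr 1
  ext k j
  obtain rfl | hj := eq_or_ne j i <;> simp [edgeMatrix, *]

end Matrices

section Convexity

theorem add_sum_smul_sub_mem_of_convex {ι 𝕜 E : Type*} [Fintype ι] [Field 𝕜] [LinearOrder 𝕜]
    [IsStrictOrderedRing 𝕜] [AddCommGroup E] [Module 𝕜 E] {s : Set E} (hs : Convex 𝕜 s) {v : E}
    {w : ι → E} (hv : v ∈ s) (hw : ∀ j, w j ∈ s) {y : ι → 𝕜} (hy : 0 ≤ y) (hsum : ∑ j, y j ≤ 1) :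
    v + ∑ j, y j • (w j - v) ∈ s := by
  have hmem := hs.sum_mem (t := Finset.univ)
    (w := fun o : Option ι => o.elim (1 - ∑ j, y j) y) (z := fun o => o.elim v w)
    (by rintro (_ | j) - <;> [exact sub_nonneg.mpr hsum; exact hy j])
    (by simp [Fintype.sum_option])
    (by rintro (_ | j) - <;> [exact hv; exact hw j])
  convert hmem using 1
  simp only [Fintype.sum_option, Option.elim, smul_sub, Finset.sum_sub_distrib, sub_smul,
    one_smul, Finset.sum_smul]
  abel

variable {ι : Type*} [Fintype ι]

theorem image_edgeMatrix_Icc_subset_of_convex {P : Set (ι → ℝ)} (hP : Convex ℝ P) {v : ι → ℝ}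
    {w : ι → ι → ℝ} (hv : v ∈ P) (hw : ∀ j, w j ∈ P) :
    (fun y => v + edgeMatrix v w *ᵥ y) '' Set.Icc 0 (fun _ => (Fintype.card ι : ℝ)⁻¹) ⊆ P := by
  rintro _ ⟨y, ⟨hy₀, hy₁⟩, rfl⟩
  have hsum : ∑ j, y j ≤ 1 :=
    calc ∑ j, y j ≤ ∑ _j : ι, (Fintype.card ι : ℝ)⁻¹ := by gcongr with j; exact hy₁ j
      _ = Fintype.card ι * (Fintype.card ι : ℝ)⁻¹ := by simp
      _ ≤ 1 := mul_inv_le_one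
  convert add_sum_smul_sub_mem_of_convex hP hv hw hy₀ hsum using 2
  ext i
  simp [edgeMatrix, mulVec, dotProduct, mul_comm]

variable [DecidableEq ι]

theorem volume_real_image_add_mulVec (v : ι → ℝ) (M : Matrix ι ι ℝ) (s : Set (ι → ℝ)) :
    volume.real ((fun y => v + M *ᵥ y) '' s) = |M.det| * volume.real s := by
  have himage : (fun y => v + M *ᵥ y) '' s = (v + ·) '' (toLin' M '' s) := by
    simp only [Set.image_image, toLin'_apply]
  rw [himage, measureReal_def, Set.image_add_left, measure_preimage_add,
    Measure.addHaar_image_linearMap, LinearMap.det_toLin', ENNReal.toReal_mul,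
    ENNReal.toReal_ofReal (abs_nonneg _), measureReal_def]

theorem abs_det_edgeMatrix_le_of_convex {P : Set (ι → ℝ)} (hP : Convex ℝ P)
    (hfin : volume P ≠ ⊤) {v : ι → ℝ} {w : ι → ι → ℝ} (hv : v ∈ P) (hw : ∀ j, w j ∈ P) :
    |(edgeMatrix v w).det| ≤ Fintype.card ι ^ Fintype.card ι * volume.real P := by
  set n := Fintype.card ι with hn
  have hcube : volume.real (Set.Icc (0 : ι → ℝ) fun _ => (n : ℝ)⁻¹) = ((n : ℝ) ^ n)⁻¹ := by
    have hnonneg : (0 : ι → ℝ) ≤ fun _ => (n : ℝ)⁻¹ := fun _ => inv_nonneg.mpr n.cast_nonneg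
    rw [measureReal_def, Real.volume_Icc_pi_toReal hnonneg]
    simp [hn]
  have hle := measureReal_mono (image_edgeMatrix_Icc_subset_of_convex hP hv hw) hfin
  rwa [volume_real_image_add_mulVec, hcube, ← div_eq_mul_inv,
    div_le_iff₀' (mod_cast Nat.pow_self_pos)] at hle

end Convexity

theorem exists_linearIndependent_sub_of_affineSpan_eq_top {K E : Type*} [DivisionRing K]
    [AddCommGroup E] [Module K E] [Module.Finite K E] {n : ℕ} (hn : finrank K E = n) {s : Set E}
    (hs : affineSpan K s = ⊤) {v : E} (hv : v ∈ s) :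
    ∃ w : Fin n → E, (∀ j, w j ∈ s) ∧ LinearIndependent K fun j => w j - v := by
  have hspan : Submodule.span K ((· -ᵥ v) '' s) = ⊤ := by
    rw [← vectorSpan_eq_span_vsub_set_right K hv, ← direction_affineSpan, hs,
      AffineSubspace.direction_top]
  have hbasis := Submodule.exists_fun_fin_finrank_span_eq K ((· -ᵥ v) '' s)
  rw [hspan, finrank_top, hn] at hbasis
  obtain ⟨f, hf, -, hli⟩ := hbasis
  choose w hw hwf using hf
  exact ⟨w, hw, (funext hwf : (fun j => w j - v) = f) ▸ hli⟩

/-- The convex hull of a set `S` of lattice points, an integral polytope when `S` is finite. -/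
def latticeHull {ι : Type*} (S : Set (ι → ℤ)) : Set (ι → ℝ) :=
  convexHull ℝ ((fun x i => (x i : ℝ)) '' S)

section LatticeHull

variable {ι : Type*} {S : Set (ι → ℤ)}

theorem intCast_mem_latticeHull {x : ι → ℤ} (hx : x ∈ S) : (fun i => (x i : ℝ)) ∈ latticeHull S :=
  subset_convexHull ℝ _ (Set.mem_image_of_mem _ hx)

theorem intCast_det_edgeMatrix [Fintype ι] [DecidableEq ι] (v : ι → ℤ) (w : ι → ι → ℤ) :
    ((edgeMatrix v w).det : ℝ) = (edgeMatrix (fun i => (v i : ℝ)) fun j i => (w j i : ℝ)).det := by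
  rw [Int.cast_det]
  congr 1
  ext i j
  simp [edgeMatrix]

theorem abs_det_edgeMatrix_le_mul_volume_latticeHull [Fintype ι] [DecidableEq ι] {v : ι → ℤ}
    {w : ι → ι → ℤ} (hfin : volume (latticeHull S) ≠ ⊤) (hv : v ∈ S) (hw : ∀ j, w j ∈ S) :
    (|(edgeMatrix v w).det| : ℝ) ≤
      Fintype.card ι ^ Fintype.card ι * volume.real (latticeHull S) := by
  rw [intCast_det_edgeMatrix]
  exact abs_det_edgeMatrix_le_of_convex (convex_convexHull ℝ _) hfin (intCast_mem_latticeHull hv)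
    fun j => intCast_mem_latticeHull (hw j)

theorem exists_det_edgeMatrix_ne_zero_of_interior_latticeHull_nonempty {n : ℕ}
    {S : Set (Fin n → ℤ)} (h : (interior (latticeHull S)).Nonempty) :
    ∃ v ∈ S, ∃ w : Fin n → Fin n → ℤ, (∀ j, w j ∈ S) ∧ (edgeMatrix v w).det ≠ 0 := by
  have hspan := interior_convexHull_nonempty_iff_affineSpan_eq_top.mp h
  obtain ⟨v, hv⟩ : S.Nonempty :=
    Set.image_nonempty.mp (convexHull_nonempty_iff.mp (h.mono interior_subset))
  obtain ⟨u, hu, hli⟩ :=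
    exists_linearIndependent_sub_of_affineSpan_eq_top (finrank_fin_fun ℝ) hspan
      (Set.mem_image_of_mem _ hv)
  choose w hw hwu using hu
  refine ⟨v, hv, w, hw, ?_⟩
  rw [← Int.cast_ne_zero (α := ℝ), intCast_det_edgeMatrix, ← isUnit_iff_ne_zero,
    ← isUnit_iff_isUnit_det, ← linearIndependent_cols_iff_isUnit]
  have hcol : (edgeMatrix (fun i => (v i : ℝ)) fun j i => (w j i : ℝ)).col =
      fun j => u j - fun i => (v i : ℝ) := by
    ext j i
    simp [edgeMatrix, ← hwu]
  rwa [hcol]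

theorem image_affine_latticeHull [Fintype ι] (A : Matrix ι ι ℤ) (t : ι → ℤ) :
    (fun (x : ι → ℝ) i => ∑ j, (A i j : ℝ) * x j + (t i : ℝ)) '' latticeHull S =
      latticeHull ((fun x => A *ᵥ x + t) '' S) := by
  let f : (ι → ℝ) →ᵃ[ℝ] (ι → ℝ) :=
    (A.map (Int.cast : ℤ → ℝ)).mulVecLin.toAffineMap + AffineMap.const ℝ _ fun i => (t i : ℝ)
  have hf : (fun (x : ι → ℝ) i => ∑ j, (A i j : ℝ) * x j + (t i : ℝ)) = f := by
    ext x i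
    simp [f, mulVec, dotProduct]
  rw [hf, latticeHull, latticeHull, AffineMap.image_convexHull, ← hf, Set.image_image,
    Set.image_image]
  simp [mulVec, dotProduct]

end LatticeHull

/-- The data determining a set `S` of lattice points up to integral affine equivalence, read off in
the frame with origin `v` and basis the columns of `M` (`det M ≠ 0`): the determinant of `M`, the
residue of `M` modulo `det M`, and the coordinates of the points of `S` with respect to the frame,
multiplied by `det M` to make them integral. -/
def frameInvariant {ι : Type*} [Fintype ι] [DecidableEq ι] (S : Set (ι → ℤ)) (v : ι → ℤ)
    (M : Matrix ι ι ℤ) : ℤ × Matrix ι ι ℤ × Set (ι → ℤ) :=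
  (M.det, M.map (· % M.det), (fun x => M.adjugate *ᵥ (x - v)) '' S)

/-- The candidate values of `frameInvariant` whose integer entries all lie in `[-B, B]`. -/
def boundedFrameInvariants (ι : Type*) (B : ℤ) : Set (ℤ × Matrix ι ι ℤ × Set (ι → ℤ)) :=
  Set.Icc (-B) B ×ˢ {R | ∀ i j, R i j ∈ Set.Icc (-B) B} ×ˢ 𝒫 {y | ∀ i, y i ∈ Set.Icc (-B) B}

section FrameInvariant

variable {ι : Type*}

theorem finite_boundedFrameInvariants [Finite ι] (B : ℤ) : (boundedFrameInvariants ι B).Finite := by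
  have hIcc : (Set.Icc (-B) B).Finite := Set.finite_Icc _ _
  exact hIcc.prod ((Set.Finite.pi' fun _ => Set.Finite.pi' fun _ => hIcc).prod
    (Set.Finite.pi' fun _ => hIcc).finite_subsets)

variable [Fintype ι] [DecidableEq ι] {S S' : Set (ι → ℤ)} {v v' : ι → ℤ}

theorem frameInvariant_edgeMatrix_mem_boundedFrameInvariants {w : ι → ι → ℤ} {B : ℤ}
    (hw : ∀ j, w j ∈ S) (hdet : (edgeMatrix v w).det ≠ 0)
    (hB : ∀ u : ι → ι → ℤ, (∀ j, u j ∈ S) → |(edgeMatrix v u).det| ≤ B) :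
    frameInvariant S v (edgeMatrix v w) ∈ boundedFrameInvariants ι B := by
  refine ⟨abs_le.mp (hB w hw), fun i j => abs_le.mp ?_, ?_⟩
  · calc |edgeMatrix v w i j % (edgeMatrix v w).det|
        = edgeMatrix v w i j % (edgeMatrix v w).det := abs_of_nonneg (Int.emod_nonneg _ hdet)
      _ ≤ |(edgeMatrix v w).det| := (Int.emod_lt_abs _ hdet).le
      _ ≤ B := hB w hw
  · rintro _ ⟨x, hx, rfl⟩ i
    have hupdate : ∀ j, Function.update w i x j ∈ S := fun j => by
      obtain rfl | hj := eq_or_ne j i <;> simp [*]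
    simpa only [adjugate_edgeMatrix_mulVec_sub_apply, Set.mem_Icc] using abs_le.mp (hB _ hupdate)

theorem exists_det_eq_one_image_eq_of_frameInvariant_eq {M N : Matrix ι ι ℤ} (hM : M.det ≠ 0)
    (h : frameInvariant S v M = frameInvariant S' v' N) :
    ∃ (A : Matrix ι ι ℤ) (t : ι → ℤ), A.det = 1 ∧ (fun x => A *ᵥ x + t) '' S = S' := by
  obtain ⟨hdet, hmod, hcoords⟩ : M.det = N.det ∧ M.map (· % M.det) = N.map (· % N.det) ∧
      (fun x => M.adjugate *ᵥ (x - v)) '' S = (fun x => N.adjugate *ᵥ (x - v')) '' S' := by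
    simpa only [frameInvariant, Prod.mk.injEq] using h
  have hdvd : ∀ i j, M.det ∣ N i j - M i j := fun i j =>
    Int.ModEq.dvd <| by simpa only [map_apply, ← hdet, Int.ModEq] using congr_fun₂ hmod i j
  obtain ⟨A, hA, rfl⟩ := exists_det_eq_one_mul_eq_of_det_dvd_sub
    (mem_nonZeroDivisors_of_ne_zero hM) hdet.symm hdvd
  refine ⟨A, v' - A *ᵥ v, hA, ?_⟩
  have hinj : Function.Injective fun x => (A * M).adjugate *ᵥ (x - v') :=
    (adjugate_mulVec_injective (mem_nonZeroDivisors_of_ne_zero (hdet ▸ hM))).comp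
      sub_left_injective
  apply hinj.image_injective
  simp only [← hcoords, Set.image_image]
  congr 1
  ext1 x
  have hsub : A *ᵥ x + (v' - A *ᵥ v) - v' = A *ᵥ (x - v) := by
    rw [mulVec_sub]
    abel
  calc (A * M).adjugate *ᵥ (A *ᵥ x + (v' - A *ᵥ v) - v')
      = (A * M).adjugate *ᵥ (A *ᵥ (x - v)) := by rw [hsub]
    _ = M.adjugate *ᵥ (x - v) := by rw [adjugate_mul_mulVec_mulVec, hA, one_smul]

end FrameInvariant

theorem affZEquiv_latticeHull_of_frameInvariant_eq {n : ℕ} {S S' : Set (Fin n → ℤ)}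
    {v v' : Fin n → ℤ} {M N : Matrix (Fin n) (Fin n) ℤ} (hM : M.det ≠ 0)
    (h : frameInvariant S v M = frameInvariant S' v' N) :
    AffZEquiv n (latticeHull S) (latticeHull S') := by
  obtain ⟨A, t, hA, rfl⟩ := exists_det_eq_one_image_eq_of_frameInvariant_eq hM h
  exact ⟨A, t, Or.inl hA, (image_affine_latticeHull A t).symm⟩

theorem IsBoundedLatticePolytope.exists_frameInvariant_mem_boundedFrameInvariants {n : ℕ} {V : ℝ}
    {P : Set (Fin n → ℝ)} (hP : IsBoundedLatticePolytope n V P) :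
    ∃ (S : Set (Fin n → ℤ)) (v : Fin n → ℤ) (M : Matrix (Fin n) (Fin n) ℤ),
      P = latticeHull S ∧ M.det ≠ 0 ∧
        frameInvariant S v M ∈ boundedFrameInvariants (Fin n) ⌊n ^ n * V⌋ := by
  obtain ⟨⟨S, hS, rfl⟩, hint, hvol⟩ := hP
  obtain ⟨v, hv, w, hw, hdet⟩ := exists_det_edgeMatrix_ne_zero_of_interior_latticeHull_nonempty hint
  refine ⟨S, v, edgeMatrix v w, rfl, hdet,
    frameInvariant_edgeMatrix_mem_boundedFrameInvariants hw hdet fun u hu => ?_⟩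
  have hfin : volume (latticeHull S) ≠ ⊤ :=
    ((hS.image _).isCompact_convexHull ℝ).measure_lt_top.ne
  rw [Int.le_floor]
  calc ((|(edgeMatrix v u).det| : ℤ) : ℝ)
      ≤ n ^ n * volume.real (latticeHull S) := by
        simpa only [Int.cast_abs, Fintype.card_fin] using
          abs_det_edgeMatrix_le_mul_volume_latticeHull hfin hv hu
    _ ≤ n ^ n * V := by gcongr; exact hvol

/-- There are only finitely many integral polytopes with nonempty interior and
volume at most `V`, up to integral affine equivalence. -/
theorem finitely_many_lattice_polytopes_of_bounded_volume (n : ℕ) (hn : 1 ≤ n)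
    (V : ℝ) (hV : 0 < V) :
    ∃ F : Finset (Set (Fin n → ℝ)),
      (∀ Q ∈ F, IsBoundedLatticePolytope n V Q) ∧
      ∀ P : Set (Fin n → ℝ), IsBoundedLatticePolytope n V P →
        ∃ Q ∈ F, AffZEquiv n P Q := by
  choose! S v M hS hdet hmem using
    fun P (hP : IsBoundedLatticePolytope n V P) =>
      hP.exists_frameInvariant_mem_boundedFrameInvariants
  have hfinite : ((fun P => frameInvariant (S P) (v P) (M P)) ''
      {P | IsBoundedLatticePolytope n V P}).Finite :=
    (finite_boundedFrameInvariants _).subset (Set.image_subset_iff.mpr hmem)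
  refine exists_finset_representatives_of_finite_image _ hfinite fun P hP Q hQ hPQ => ?_
  rw [hS P hP, hS Q hQ]
  exact affZEquiv_latticeHull_of_frameInvariant_eq (hdet P hP) hPQ
end

section
/- Let d ≥ 3 and let v₁, …, v_d ∈ ℤ² be distinct points that are the vertices of the convex polygon D = conv{v₁, …, v_d} ⊂ ℝ² (i.e., no v_i lies in the convex hull of the others, and D has nonempty interior). Assume that the only points of ℤ² lying on the topological boundary of D are the vertices v₁, …, v_d. Then vol(D) ≥ 3(d − 4)/2, where vol denotes Lebesgue measure on ℝ². -/
open MeasureTheory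

/-!
Choose a linear form `ℓ` that is injective on the vertices and think of it as a height. The segment
from the lowest vertex to the highest one cuts the polygon into two convex chains, one on each side.

Consider a chain with lowest vertex `a` and highest vertices `m`, `q`, in this order. By convexity,
the doubled areas of the triangles `x m q`, where `x` runs through the vertices below `q`, strictly
decrease to `0` as `x` rises from `a` to `m`. They are integers, so if there are `n` such vertices,
the triangle `a m q` has area at least `(n - 1) / 2`. Cutting off these triangles from the top
downwards shows that a chain of `n` vertices spans an area of at least
`(n - 1).choose 2 / 2 ≥ (3 * n - 9) / 2`. The two chains have `d + 2` vertices in total because they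
share their end points, and the two estimates add up to `3 * (d - 4) / 2`.
-/

section AffineSeparation

variable {E : Type*} [NormedAddCommGroup E] [NormedSpace ℝ E] [FiniteDimensional ℝ E]
  [MeasurableSpace E] [BorelSpace E] (μ : Measure E) [μ.IsAddHaarMeasure]
  {f : E →ᵃ[ℝ] ℝ}

theorem measure_zeros_affineMap_eq_zero (hf : f ≠ 0) : μ {x | f x = 0} = 0 := by
  let Z : AffineSubspace ℝ E := (AffineSubspace.mk' (0 : ℝ) ⊥).comap f
  have hZ : (Z : Set E) = {x | f x = 0} := by
    ext x
    simp [Z, AffineSubspace.mem_mk']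
  have hZ_top : Z ≠ ⊤ := by
    contrapose! hf
    ext x
    have hx : x ∈ (Z : Set E) := by simp [hf]
    simpa [hZ] using hx
  exact hZ ▸ Measure.addHaar_affineSubspace μ Z hZ_top

theorem aedisjoint_of_affineMap_nonpos_nonneg (hf : f ≠ 0) {A B : Set E}
    (hA : ∀ x ∈ A, f x ≤ 0) (hB : ∀ x ∈ B, 0 ≤ f x) : AEDisjoint μ A B :=
  measure_mono_null (fun x hx ↦ (hA x hx.1).antisymm (hB x hx.2))
    (measure_zeros_affineMap_eq_zero μ hf)

theorem measureReal_convexHull_add_le (hf : f ≠ 0) {s t u : Set E}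
    (hu : Bornology.IsBounded u) (hsu : s ⊆ u) (htu : t ⊆ u)
    (hs : ∀ x ∈ s, f x ≤ 0) (ht : ∀ x ∈ t, 0 ≤ f x) :
    μ.real (convexHull ℝ s) + μ.real (convexHull ℝ t) ≤ μ.real (convexHull ℝ u) := by
  have hfin : μ (convexHull ℝ u) ≠ ⊤ := (isBounded_convexHull.mpr hu).measure_lt_top.ne
  have hsu' := convexHull_mono (𝕜 := ℝ) hsu
  have htu' := convexHull_mono (𝕜 := ℝ) htu
  have hdisj : AEDisjoint μ (convexHull ℝ s) (convexHull ℝ t) :=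
    aedisjoint_of_affineMap_nonpos_nonneg μ hf
      (convexHull_min hs ((convex_Iic (0 : ℝ)).affine_preimage f))
      (convexHull_min ht ((convex_Ici (0 : ℝ)).affine_preimage f))
  rw [← measureReal_union₀ ((convex_convexHull ℝ t).nullMeasurableSet μ) hdisj
    (measure_ne_top_of_subset hsu' hfin) (measure_ne_top_of_subset htu' hfin)]
  exact measureReal_mono (Set.union_subset hsu' htu') hfin

end AffineSeparation

/-- Twice the signed area of the triangle `a b c`, as an affine function of `c`. It is positive
exactly when the path `a → b → c` turns left. -/
def turn (a b : Fin 2 → ℝ) : (Fin 2 → ℝ) →ᵃ[ℝ] ℝ where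
  toFun c := (b 0 - a 0) * (c 1 - a 1) - (b 1 - a 1) * (c 0 - a 0)
  linear := (b 0 - a 0) • LinearMap.proj 1 - (b 1 - a 1) • LinearMap.proj 0
  map_vadd' c v := by
    simp only [vadd_eq_add, Pi.add_apply, LinearMap.sub_apply, LinearMap.smul_apply,
      LinearMap.proj_apply, smul_eq_mul]
    ring

theorem turn_apply (a b c : Fin 2 → ℝ) :
    turn a b c = (b 0 - a 0) * (c 1 - a 1) - (b 1 - a 1) * (c 0 - a 0) := rfl

@[simp]
theorem turn_self_left (a b : Fin 2 → ℝ) : turn a a b = 0 := by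
  simp [turn_apply]

@[simp]
theorem turn_self_outer (a b : Fin 2 → ℝ) : turn a b a = 0 := by
  simp [turn_apply]

@[simp]
theorem turn_self_right (a b : Fin 2 → ℝ) : turn a b b = 0 := by
  rw [turn_apply]
  ring

theorem turn_rotate (a b c : Fin 2 → ℝ) : turn b c a = turn a b c := by
  simp only [turn_apply]
  ring

theorem turn_swap_right (a b c : Fin 2 → ℝ) : turn a c b = -turn a b c := by
  simp only [turn_apply]
  ring

theorem turn_ne_zero {a b : Fin 2 → ℝ} (hab : a ≠ b) : turn a b ≠ 0 := by
  contrapose! hab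
  have h₀ : turn a b ![a 0, a 1 + 1] = 0 := by simp [hab]
  have h₁ : turn a b ![a 0 + 1, a 1] = 0 := by simp [hab]
  ext i
  fin_cases i
  · simpa [turn_apply, sub_eq_zero, eq_comm (a := b 0)] using h₀
  · simpa [turn_apply, sub_eq_zero, eq_comm (a := b 1)] using h₁

theorem mem_convexHull_stdTriangle {x : Fin 2 → ℝ} :
    x ∈ convexHull ℝ {0, ![1, 0], ![0, 1]} ↔ 0 ≤ x 0 ∧ 0 ≤ x 1 ∧ x 0 + x 1 ≤ 1 := by
  constructor
  · let coord (i : Fin 2) : (Fin 2 → ℝ) →ₗ[ℝ] ℝ := LinearMap.proj i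
    have hconvex : Convex ℝ ({x | 0 ≤ coord 0 x} ∩ ({x | 0 ≤ coord 1 x} ∩
        {x | (coord 0 + coord 1) x ≤ 1})) :=
      (convex_halfSpace_ge (coord 0).isLinear 0).inter
        ((convex_halfSpace_ge (coord 1).isLinear 0).inter
          (convex_halfSpace_le (coord 0 + coord 1).isLinear 1))
    exact fun hx ↦ convexHull_min (by rintro _ (rfl | rfl | rfl) <;> simp [coord]) hconvex hx
  · rintro ⟨h₀, h₁, h₂⟩
    have hsum : x = ∑ i : Fin 3, ![1 - x 0 - x 1, x 0, x 1] i •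
        (![0, ![1, 0], ![0, 1]] : Fin 3 → Fin 2 → ℝ) i := by
      ext i
      fin_cases i <;> simp [Fin.sum_univ_three]
    rw [hsum]
    refine (convex_convexHull ℝ _).sum_mem (fun i _ ↦ ?_) ?_ fun i _ ↦ subset_convexHull ℝ _ ?_
    · fin_cases i <;> simp <;> linarith
    · simp [Fin.sum_univ_three]
      ring
    · fin_cases i <;> simp

theorem volume_real_convexHull_stdTriangle :
    volume.real (convexHull ℝ {(0 : Fin 2 → ℝ), ![1, 0], ![0, 1]}) = 1 / 2 := by
  set T := convexHull ℝ {(0 : Fin 2 → ℝ), ![1, 0], ![0, 1]}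
  let T' : Set (Fin 2 → ℝ) := (fun x ↦ 1 - x) ⁻¹' T
  have hmem {x : Fin 2 → ℝ} : x ∈ T ↔ 0 ≤ x 0 ∧ 0 ≤ x 1 ∧ x 0 + x 1 ≤ 1 :=
    mem_convexHull_stdTriangle
  have hmem' {x : Fin 2 → ℝ} : x ∈ T' ↔ x 0 ≤ 1 ∧ x 1 ≤ 1 ∧ 1 ≤ x 0 + x 1 := by
    simp only [T', Set.mem_preimage, hmem, Pi.sub_apply, Pi.one_apply]
    constructor <;> rintro ⟨h₀, h₁, h₂⟩ <;> refine ⟨?_, ?_, ?_⟩ <;> linarith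
  have hmeas : NullMeasurableSet T volume := (convex_convexHull ℝ _).nullMeasurableSet volume
  have hpres := Measure.measurePreserving_sub_left volume (1 : Fin 2 → ℝ)
  have hunion : T ∪ T' = Set.Icc 0 1 := by
    ext x
    simp only [Set.mem_union, hmem, hmem', Set.mem_Icc, Pi.le_def, Fin.forall_fin_two,
      Pi.zero_apply, Pi.one_apply]
    grind
  have hturn (x : Fin 2 → ℝ) : turn ![1, 0] ![0, 1] x = 1 - x 0 - x 1 := by
    simp only [turn_apply, Matrix.cons_val_zero, Matrix.cons_val_one]
    ring
  have hdisj : AEDisjoint volume T' T := by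
    refine aedisjoint_of_affineMap_nonpos_nonneg volume
      (turn_ne_zero (a := ![1, 0]) (b := ![0, 1]) (by simp)) (fun x hx ↦ ?_) fun x hx ↦ ?_
    · linarith [hturn x, hmem'.1 hx]
    · linarith [hturn x, hmem.1 hx]
  have htwo : (1 : ENNReal) = volume T + volume T :=
    calc (1 : ENNReal) = volume (T' ∪ T) := by simp [Set.union_comm, hunion, Real.volume_Icc_pi]
      _ = volume T + volume T := by
        rw [measure_union₀ hmeas hdisj, hpres.measure_preimage hmeas]
  have htwo' : 1 = 2 * volume.real T := by
    simpa [← two_mul, measureReal_def] using congrArg ENNReal.toReal htwo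
  linarith

open scoped Pointwise in
theorem volume_real_convexHull_triangle (a b c : Fin 2 → ℝ) :
    volume.real (convexHull ℝ {a, b, c}) = |turn a b c| / 2 := by
  let L := Matrix.toLin' !![b 0 - a 0, c 0 - a 0; b 1 - a 1, c 1 - a 1]
  have hdet : LinearMap.det L = turn a b c := by
    simp only [L, LinearMap.det_toLin', Matrix.det_fin_two_of, turn_apply]
    ring
  have himage : {a, b, c} = a +ᵥ L '' {0, ![1, 0], ![0, 1]} := by
    have hb : a + L ![1, 0] = b := by ext i; fin_cases i <;> simp [L]
    have hc : a + L ![0, 1] = c := by ext i; fin_cases i <;> simp [L]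
    simp [← Set.image_vadd, Set.image_insert_eq, hb, hc]
  rw [himage, convexHull_vadd, ← LinearMap.image_convexHull, measureReal_def, measure_vadd,
    Measure.addHaar_image_linearMap, hdet, ENNReal.toReal_mul,
    ENNReal.toReal_ofReal (abs_nonneg _), ← measureReal_def, volume_real_convexHull_stdTriangle]
  ring

section Height

variable (ℓ : Module.Dual ℝ (Fin 2 → ℝ))

theorem dual_fin_two_apply (x : Fin 2 → ℝ) : ℓ x = x 0 * ℓ ![1, 0] + x 1 * ℓ ![0, 1] := by
  have hx : x = x 0 • ![1, 0] + x 1 • ![0, 1] := by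
    ext i
    fin_cases i <;> simp
  conv_lhs => rw [hx, map_add, map_smul, map_smul, smul_eq_mul, smul_eq_mul]

theorem height_mul_turn_sub (x y m q : Fin 2 → ℝ) :
    (ℓ m - ℓ y) * (turn x m q - turn y m q) =
      (ℓ q - ℓ m) * turn x y m + (ℓ y - ℓ x) * turn y m q := by
  rw [dual_fin_two_apply ℓ x, dual_fin_two_apply ℓ y, dual_fin_two_apply ℓ m,
    dual_fin_two_apply ℓ q]
  simp only [turn_apply]
  ring

theorem exists_level_direction :
    ∃ w, ∀ a x b, (ℓ b - ℓ x) • (a - x) + (ℓ x - ℓ a) • (b - x) = turn a x b • w := by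
  refine ⟨![-ℓ ![0, 1], ℓ ![1, 0]], fun a x b ↦ ?_⟩
  ext i
  rw [dual_fin_two_apply ℓ a, dual_fin_two_apply ℓ b, dual_fin_two_apply ℓ x]
  fin_cases i <;> simp [turn_apply] <;> ring

-- The chords `a b` and `c d` meet the level line of `ℓ` through `x` on opposite sides of `x`.
theorem mem_of_between_chords {C : Set (Fin 2 → ℝ)} (hC : Convex ℝ C) {a b c d x : Fin 2 → ℝ}
    (ha : a ∈ C) (hb : b ∈ C) (hc : c ∈ C) (hd : d ∈ C)
    (hax : ℓ a < ℓ x) (hxb : ℓ x < ℓ b) (hcx : ℓ c < ℓ x) (hxd : ℓ x < ℓ d)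
    (hab : 0 ≤ turn a x b) (hcd : turn c x d ≤ 0) : x ∈ C := by
  obtain ⟨w, hw⟩ := exists_level_direction ℓ
  have mem_chord {a b : Fin 2 → ℝ} (ha : a ∈ C) (hb : b ∈ C) (hax : ℓ a < ℓ x)
      (hxb : ℓ x < ℓ b) : x + (turn a x b / (ℓ b - ℓ a)) • w ∈ C := by
    have hpos : 0 < ℓ b - ℓ a := by linarith
    have hcombo : x + (turn a x b / (ℓ b - ℓ a)) • w =
        ((ℓ b - ℓ x) / (ℓ b - ℓ a)) • a + ((ℓ x - ℓ a) / (ℓ b - ℓ a)) • b := by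
      rw [div_eq_inv_mul, mul_smul, ← hw]
      ext i
      simp only [Pi.add_apply, Pi.smul_apply, Pi.sub_apply, smul_eq_mul]
      field_simp
      ring
    rw [hcombo]
    exact hC ha hb (div_nonneg (sub_nonneg.2 hxb.le) hpos.le)
      (div_nonneg (sub_nonneg.2 hax.le) hpos.le) (by field_simp; ring)
  let level : ℝ →ᵃ[ℝ] (Fin 2 → ℝ) := AffineMap.lineMap x (x + w)
  have hlevel (r : ℝ) : level r = x + r • w := by
    simp [level, AffineMap.lineMap_apply, add_comm]
  have hzero : (0 : ℝ) ∈ level ⁻¹' C :=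
    (hC.affine_preimage level).ordConnected.out
      (x := turn c x d / (ℓ d - ℓ c)) (y := turn a x b / (ℓ b - ℓ a))
      (by simpa only [Set.mem_preimage, hlevel] using mem_chord hc hd hcx hxd)
      (by simpa only [Set.mem_preimage, hlevel] using mem_chord ha hb hax hxb)
      ⟨div_nonpos_of_nonpos_of_nonneg hcd (by linarith), div_nonneg hab (by linarith)⟩
  simpa [hlevel] using hzero

end Height

/-- A set of points such that every path through three of its points along which the height `ℓ`
increases turns left. If `ℓ` is injective on the set, its points are the vertices of a convex curve
that is a graph over the `ℓ`-axis. -/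
def IsConvexChain (ℓ : Module.Dual ℝ (Fin 2 → ℝ)) (s : Set (Fin 2 → ℝ)) : Prop :=
  ∀ x ∈ s, ∀ y ∈ s, ∀ z ∈ s, ℓ x < ℓ y → ℓ y < ℓ z → 0 < turn x y z

section ConvexChain

variable {ℓ : Module.Dual ℝ (Fin 2 → ℝ)} {s t : Set (Fin 2 → ℝ)} {a b m q x y : Fin 2 → ℝ}

theorem IsConvexChain.mono (hst : s ⊆ t) (ht : IsConvexChain ℓ t) : IsConvexChain ℓ s :=
  fun x hx y hy z hz ↦ ht x (hst hx) y (hst hy) z (hst hz)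

theorem IsConvexChain.turn_lt_turn (hs : IsConvexChain ℓ s) (hinj : Set.InjOn ℓ s)
    (hx : x ∈ s) (hy : y ∈ s) (hm : m ∈ s) (hq : q ∈ s)
    (hxy : ℓ x < ℓ y) (hym : ℓ y ≤ ℓ m) (hmq : ℓ m < ℓ q) : turn y m q < turn x m q := by
  rcases hym.eq_or_lt with heq | hlt
  · rw [hinj hy hm heq, turn_self_left]
    exact hs x hx m hm q hq (heq ▸ hxy) hmq
  · have hpos : 0 < (ℓ m - ℓ y) * (turn x m q - turn y m q) := by
      rw [height_mul_turn_sub]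
      exact add_pos (mul_pos (sub_pos.2 hmq) (hs x hx y hy m hm hxy hlt))
        (mul_pos (sub_pos.2 hxy) (hs y hy m hm q hq hlt hmq))
    exact sub_pos.1 (pos_of_mul_pos_right hpos (sub_pos.2 hlt).le)

theorem isConvexChain_of_convexIndependent (hs : ConvexIndependent ℝ ((↑) : s → Fin 2 → ℝ))
    (ha : a ∈ s) (hb : b ∈ s) (hmin : ∀ x ∈ s, ℓ a ≤ ℓ x) (hmax : ∀ x ∈ s, ℓ x ≤ ℓ b) :
    IsConvexChain ℓ {x ∈ s | 0 ≤ turn a x b} := by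
  rintro x ⟨hx, -⟩ y ⟨hy, hy_turn⟩ z ⟨hz, -⟩ hxy hyz
  by_contra! hle
  have hay := (hmin x hx).trans_lt hxy
  have hyb := hyz.trans_le (hmax z hz)
  have mem_others {p : Fin 2 → ℝ} (hp : p ∈ s) (hne : ℓ p ≠ ℓ y) :
      p ∈ convexHull ℝ (s \ {y}) :=
    subset_convexHull ℝ _ ⟨hp, fun h ↦ hne (congrArg ℓ h)⟩
  exact convexIndependent_set_iff_notMem_convexHull_sdiff.1 hs y hy <|
    mem_of_between_chords ℓ (convex_convexHull ℝ _) (mem_others ha hay.ne)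
      (mem_others hb hyb.ne') (mem_others hx hxy.ne) (mem_others hz hyz.ne') hay hyb hxy hyz
      hy_turn hle

theorem IsConvexChain.turn_extremes_nonpos (hs : IsConvexChain ℓ s) (hinj : Set.InjOn ℓ s)
    (ha : a ∈ s) (hm : m ∈ s) (hmin : ∀ x ∈ s, ℓ a ≤ ℓ x) (hmax : ∀ x ∈ s, ℓ x ≤ ℓ m)
    (hx : x ∈ s) : turn a m x ≤ 0 := by
  rcases (hmin x hx).eq_or_lt with heq | hax
  · simp [← hinj ha hx heq]
  rcases (hmax x hx).eq_or_lt with heq | hxm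
  · simp [hinj hx hm heq]
  rw [turn_swap_right]
  exact neg_nonpos.2 (hs a ha x hx m hm hax hxm).le

theorem IsConvexChain.volume_add_turn_le (hs : IsConvexChain ℓ s) (hinj : Set.InjOn ℓ s)
    (hbdd : Bornology.IsBounded s)
    (ha : a ∈ s) (hm : m ∈ s) (hmin : ∀ x ∈ s, ℓ a ≤ ℓ x) (hmax : ∀ x ∈ s, ℓ x ≤ ℓ m)
    (hq : 0 ≤ turn a m q) :
    volume.real (convexHull ℝ s) + turn a m q / 2 ≤ volume.real (convexHull ℝ (insert q s)) := by
  have hbdd' : Bornology.IsBounded (insert q s) := hbdd.insert q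
  obtain rfl | ham := eq_or_ne a m
  · simpa using measureReal_mono (μ := volume)
      (convexHull_mono (𝕜 := ℝ) (Set.subset_insert q s))
      (isBounded_convexHull.2 hbdd').measure_lt_top.ne
  · rw [← abs_of_nonneg hq, ← volume_real_convexHull_triangle]
    refine measureReal_convexHull_add_le volume (turn_ne_zero ham) hbdd'
      (Set.subset_insert q s) ?_ (fun x ↦ hs.turn_extremes_nonpos hinj ha hm hmin hmax) ?_
    · rintro x (rfl | rfl | rfl)
      exacts [.inr ha, .inr hm, .inl rfl]
    · rintro x (rfl | rfl | rfl)
      · simp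
      · simp
      · exact hq

end ConvexChain

theorem exists_dual_injOn {E : Type*} [AddCommGroup E] [Module ℝ E] {s : Set E} (hs : s.Finite) :
    ∃ ℓ : Module.Dual ℝ E, Set.InjOn ℓ s := by
  have := hs.to_subtype
  obtain ⟨ℓ, hℓ⟩ := Module.exists_dual_forall_apply_ne_zero (K := ℝ)
    (fun p : {p : s × s // p.1 ≠ p.2} ↦ (p.1.1 - p.1.2 : E))
    fun p ↦ sub_ne_zero.2 (Subtype.coe_ne_coe.2 p.2)
  refine ⟨ℓ, fun x hx y hy hxy ↦ ?_⟩
  by_contra hne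
  exact hℓ ⟨(⟨x, hx⟩, ⟨y, hy⟩), by simpa using hne⟩ (by simp [hxy])

/-- The integer lattice of the plane. Integrality of a coordinate is membership in a subring of `ℝ`,
so that it passes to polynomial expressions. -/
def latticePoints : Set (Fin 2 → ℝ) := {p | ∀ i, p i ∈ (Int.castRingHom ℝ).range}

theorem turn_mem_range_intCast {a b c : Fin 2 → ℝ} (ha : a ∈ latticePoints)
    (hb : b ∈ latticePoints) (hc : c ∈ latticePoints) :
    turn a b c ∈ (Int.castRingHom ℝ).range :=
  sub_mem (mul_mem (sub_mem (hb 0) (ha 0)) (sub_mem (hc 1) (ha 1)))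
    (mul_mem (sub_mem (hb 1) (ha 1)) (sub_mem (hc 0) (ha 0)))

theorem card_le_add_one_of_injOn_intCast {α : Type*} {s : Finset α} {f : α → ℝ} {B : ℝ}
    (hinj : Set.InjOn f s) (hint : ∀ x ∈ s, f x ∈ (Int.castRingHom ℝ).range)
    (hmaps : Set.MapsTo f s (Set.Icc 0 B)) (hB : 0 ≤ B) : (s.card : ℝ) ≤ B + 1 := by
  have hfloor {x : α} (hx : x ∈ s) : (⌊f x⌋ : ℝ) = f x := by
    obtain ⟨n, hn⟩ := hint x hx
    simp [← hn]
  have hcard : s.card ≤ (Finset.Icc 0 ⌊B⌋).card := by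
    refine Finset.card_le_card_of_injOn (fun x ↦ ⌊f x⌋) (fun x hx ↦ ?_) fun x hx y hy hxy ↦ ?_
    · obtain ⟨h₀, h₁⟩ := hmaps hx
      exact Finset.mem_coe.2 (Finset.mem_Icc.2 ⟨Int.floor_nonneg.2 h₀, Int.floor_mono h₁⟩)
    · exact hinj hx hy (by rw [← hfloor hx, ← hfloor hy]; exact congrArg _ hxy)
  have hfloorB : 0 ≤ ⌊B⌋ := Int.floor_nonneg.2 hB
  rw [Int.card_Icc] at hcard
  calc (s.card : ℝ) ≤ ((⌊B⌋ + 1 : ℤ) : ℝ) := by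
        rw [← Int.cast_natCast, Int.cast_le]
        omega
    _ ≤ B + 1 := by
        push_cast
        linarith [Int.floor_le B]

theorem three_mul_le_choose_two_add_six (m : ℕ) : 3 * m ≤ m.choose 2 + 6 := by
  induction m with
  | zero => simp
  | succ m ih =>
    have hchoose : (m + 1).choose 2 = m + m.choose 2 := by
      rw [Nat.choose_succ_succ', Nat.choose_one_right]
    obtain hm | hm := Nat.lt_or_ge m 3
    · interval_cases m <;> decide
    · omega

section LatticeChain

variable {ℓ : Module.Dual ℝ (Fin 2 → ℝ)} {s : Finset (Fin 2 → ℝ)} {a m q : Fin 2 → ℝ}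

theorem IsConvexChain.card_le_turn_add_one (hs : IsConvexChain ℓ (insert q s))
    (hinj : Set.InjOn ℓ (insert q s)) (hlat : insert q (s : Set (Fin 2 → ℝ)) ⊆ latticePoints)
    (ha : a ∈ s) (hm : m ∈ s) (hmin : ∀ x ∈ s, ℓ a ≤ ℓ x) (hmax : ∀ x ∈ s, ℓ x ≤ ℓ m)
    (hmq : ℓ m < ℓ q) : (s.card : ℝ) ≤ turn a m q + 1 := by
  have mem {x : Fin 2 → ℝ} (hx : x ∈ s) : x ∈ insert q (s : Set (Fin 2 → ℝ)) := .inr hx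
  have turn_lt {x y : Fin 2 → ℝ} (hx : x ∈ s) (hy : y ∈ s) (hxy : ℓ x < ℓ y) :
      turn y m q < turn x m q :=
    hs.turn_lt_turn hinj (mem hx) (mem hy) (mem hm) (.inl rfl) hxy (hmax y hy) hmq
  have turn_le {x y : Fin 2 → ℝ} (hx : x ∈ s) (hy : y ∈ s) (hxy : ℓ x ≤ ℓ y) :
      turn y m q ≤ turn x m q := by
    rcases hxy.eq_or_lt with heq | hlt
    · rw [hinj (mem hx) (mem hy) heq]
    · exact (turn_lt hx hy hlt).le
  have turn_nonneg {x : Fin 2 → ℝ} (hx : x ∈ s) : 0 ≤ turn x m q := by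
    simpa using turn_le hx hm (hmax x hx)
  refine card_le_add_one_of_injOn_intCast (f := fun x ↦ turn x m q) (fun x hx y hy hxy ↦ ?_)
    (fun x hx ↦ turn_mem_range_intCast (hlat (mem hx)) (hlat (mem hm)) (hlat (.inl rfl)))
    (fun x hx ↦ ⟨turn_nonneg hx, turn_le ha hx (hmin x hx)⟩) (turn_nonneg ha)
  refine hinj (mem hx) (mem hy) (le_antisymm ?_ ?_) <;> by_contra! hlt
  · exact (turn_lt hy hx hlt).ne hxy
  · exact (turn_lt hx hy hlt).ne' hxy

theorem IsConvexChain.choose_two_le_volume (hs : IsConvexChain ℓ s)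
    (hinj : Set.InjOn ℓ s) (hlat : (s : Set (Fin 2 → ℝ)) ⊆ latticePoints) :
    ((s.card - 1).choose 2 : ℝ) / 2 ≤ volume.real (convexHull ℝ (s : Set (Fin 2 → ℝ))) := by
  classical
  induction s using Finset.induction_on_max_value ℓ with
  | empty => simp
  | insert q s hq hq_max ih =>
    rw [Finset.coe_insert] at *
    have hsub : (s : Set (Fin 2 → ℝ)) ⊆ insert q (s : Set (Fin 2 → ℝ)) := Set.subset_insert _ _
    have ih := ih (hs.mono hsub) (hinj.mono hsub) (hsub.trans hlat)
    obtain rfl | hne := s.eq_empty_or_nonempty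
    · simp
    obtain ⟨a, ha, hmin⟩ := s.exists_min_image ℓ hne
    obtain ⟨m, hm, hmax⟩ := s.exists_max_image ℓ hne
    have hmq : ℓ m < ℓ q := (hq_max m hm).lt_of_ne fun h ↦
      hq (hinj (.inr hm) (.inl rfl) h ▸ hm)
    have hturn : (s.card : ℝ) ≤ turn a m q + 1 :=
      hs.card_le_turn_add_one hinj hlat ha hm hmin hmax hmq
    have hcard : (1 : ℝ) ≤ s.card := by exact_mod_cast hne.card_pos
    have harea := (hs.mono hsub).volume_add_turn_le (q := q) (hinj.mono hsub)
      s.finite_toSet.isBounded ha hm hmin hmax (by linarith)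
    obtain ⟨n, hn⟩ : ∃ n, s.card = n + 1 := Nat.exists_eq_succ_of_ne_zero hne.card_pos.ne'
    rw [hn] at ih hturn
    rw [Finset.card_insert_of_notMem hq, hn, Nat.add_sub_cancel, Nat.choose_succ_succ',
      Nat.choose_one_right]
    push_cast at ih hturn ⊢
    linarith

theorem IsConvexChain.three_mul_card_sub_nine_le_volume (hs : IsConvexChain ℓ s)
    (hinj : Set.InjOn ℓ s) (hlat : (s : Set (Fin 2 → ℝ)) ⊆ latticePoints) :
    (3 * (s.card : ℝ) - 9) / 2 ≤ volume.real (convexHull ℝ (s : Set (Fin 2 → ℝ))) := by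
  have hchoose : 3 * s.card ≤ (s.card - 1).choose 2 + 9 := by
    have := three_mul_le_choose_two_add_six (s.card - 1)
    omega
  have hchoose' : 3 * (s.card : ℝ) ≤ (s.card - 1).choose 2 + 9 := by exact_mod_cast hchoose
  linarith [hs.choose_two_le_volume hinj hlat]

theorem exists_convexChain_decomposition
    (hs : ConvexIndependent ℝ ((↑) : ↥(s : Set (Fin 2 → ℝ)) → Fin 2 → ℝ))
    (hinj : Set.InjOn ℓ s) (hnontrivial : s.Nontrivial) :
    ∃ t ⊆ s, ∃ u ⊆ s, IsConvexChain ℓ t ∧ IsConvexChain (-ℓ) u ∧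
      s.card + 2 ≤ t.card + u.card ∧
      volume.real (convexHull ℝ (t : Set (Fin 2 → ℝ))) +
        volume.real (convexHull ℝ (u : Set (Fin 2 → ℝ))) ≤
          volume.real (convexHull ℝ (s : Set (Fin 2 → ℝ))) := by
  classical
  obtain ⟨a, ha, hmin⟩ := s.exists_min_image ℓ hnontrivial.nonempty
  obtain ⟨b, hb, hmax⟩ := s.exists_max_image ℓ hnontrivial.nonempty
  have hab : a ≠ b := by
    rintro rfl
    obtain ⟨x, hx, hxa⟩ := hnontrivial.exists_ne a
    exact hxa (hinj hx ha ((hmax x hx).antisymm (hmin x hx)))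
  let right := s.filter fun x ↦ 0 ≤ turn a x b
  let left := s.filter fun x ↦ 0 ≤ turn b x a
  have hright : right ⊆ s := s.filter_subset _
  have hleft : left ⊆ s := s.filter_subset _
  refine ⟨right, hright, left, hleft, ?_, ?_, ?_, ?_⟩
  · simpa [right] using isConvexChain_of_convexIndependent hs ha hb hmin hmax
  · simpa [left] using isConvexChain_of_convexIndependent (ℓ := -ℓ) hs hb ha
      (fun x hx ↦ neg_le_neg (hmax x hx)) fun x hx ↦ neg_le_neg (hmin x hx)
  · have hunion : s ⊆ right ∪ left := fun x hx ↦ by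
      simpa [right, left, hx, turn_rotate a b x, turn_swap_right a x b]
        using le_total 0 (turn a x b)
    have hinter : {a, b} ⊆ right ∩ left := by
      simp [Finset.insert_subset_iff, right, left, ha, hb]
    calc s.card + 2 = s.card + ({a, b} : Finset _).card := by rw [Finset.card_pair hab]
      _ ≤ (right ∪ left).card + (right ∩ left).card :=
        add_le_add (Finset.card_le_card hunion) (Finset.card_le_card hinter)
      _ = right.card + left.card := Finset.card_union_add_card_inter _ _
  · refine measureReal_convexHull_add_le volume (turn_ne_zero hab) s.finite_toSet.isBounded
      hright hleft (fun x hx ↦ ?_) fun x hx ↦ ?_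
    · rw [turn_swap_right]
      exact neg_nonpos.2 (Finset.mem_filter.1 hx).2
    · rw [← turn_rotate]
      exact (Finset.mem_filter.1 hx).2

theorem le_volume_convexHull_of_convexIndependent
    (hlat : (s : Set (Fin 2 → ℝ)) ⊆ latticePoints)
    (hs : ConvexIndependent ℝ ((↑) : ↥(s : Set (Fin 2 → ℝ)) → Fin 2 → ℝ)) :
    3 * ((s.card : ℝ) - 4) / 2 ≤ volume.real (convexHull ℝ (s : Set (Fin 2 → ℝ))) := by
  obtain hsmall | hlarge := Nat.lt_or_ge 1 s.card |>.symm
  · have hsmall' : (s.card : ℝ) ≤ 1 := by exact_mod_cast hsmall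
    have hnonneg := measureReal_nonneg (μ := volume) (s := convexHull ℝ (s : Set (Fin 2 → ℝ)))
    linarith
  obtain ⟨ℓ, hinj⟩ := exists_dual_injOn s.finite_toSet
  obtain ⟨t, hts, u, hus, ht, hu, hcard, hsplit⟩ :=
    exists_convexChain_decomposition hs hinj (Finset.one_lt_card_iff_nontrivial.1 hlarge)
  have ht_area := ht.three_mul_card_sub_nine_le_volume (hinj.mono hts) (hlat.trans' hts)
  have hu_area := hu.three_mul_card_sub_nine_le_volume
    (neg_injective.comp_injOn (hinj.mono hus)) (hlat.trans' hus)
  have hcard' : (s.card : ℝ) + 2 ≤ t.card + u.card := by exact_mod_cast hcard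
  linarith

end LatticeChain

theorem toric_diagram_area_lower_bound_general {ι : Type*} [Fintype ι] (v : ι → Fin 2 → ℤ)
    (hv : ConvexIndependent ℝ fun i j ↦ (v i j : ℝ)) :
    3 * ((Fintype.card ι : ℝ) - 4) / 2 ≤
      volume.real (convexHull ℝ (Set.range fun i j ↦ (v i j : ℝ))) := by
  classical
  let p : ι → Fin 2 → ℝ := fun i j ↦ v i j
  have hcard : (Finset.univ.image p).card = Fintype.card ι :=
    Finset.card_image_of_injective _ hv.injective
  have hrange : (Finset.univ.image p : Set (Fin 2 → ℝ)) = Set.range p := by simp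
  have hlat : Set.range p ⊆ latticePoints := by
    rintro _ ⟨i, rfl⟩ j
    exact ⟨v i j, rfl⟩
  rw [← hcard, ← hrange]
  exact le_volume_convexHull_of_convexIndependent (hrange ▸ hlat) (hrange ▸ hv.range)

/-- A convex lattice polygon with `d` vertices whose only boundary lattice points
are its vertices has area at least `3(d-4)/2`. -/
theorem toric_diagram_area_lower_bound (d : ℕ) (hd : 3 ≤ d)
    (v : Fin d → (Fin 2 → ℤ)) (hinj : Function.Injective v)
    (D : Set (Fin 2 → ℝ))
    (hD : D = convexHull ℝ (Set.range (fun i => (fun j => (v i j : ℝ)))))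
    (hvert : ∀ i : Fin d,
      (fun j => (v i j : ℝ)) ∉
        convexHull ℝ ((fun i' => (fun j => (v i' j : ℝ))) '' {i' : Fin d | i' ≠ i}))
    (hint : (interior D).Nonempty)
    (hbdry : ∀ x : Fin 2 → ℤ, (fun j => (x j : ℝ)) ∈ frontier D → ∃ i, v i = x) :
    3 * ((d : ℝ) - 4) / 2 ≤ (volume D).toReal := by
  simpa [hD, measureReal_def] using toric_diagram_area_lower_bound_general v <|
    convexIndependent_iff_notMem_convexHull_sdiff.2 fun i _ h ↦
      hvert i (convexHull_mono (Set.image_mono fun _ hj ↦ hj.2) h)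
end

section
/- Let n ≥ 1, let e₁, …, e_{2n} denote the standard basis of ℝ^{2n}, and consider the following 2n + 2 points of ℤ^{2n+1} = ℤ^{2n} × ℤ: the origin 0, the points (e_j, 0) for j = 1, …, 2n, and the point (e₁ + ⋯ + e_{2n}, 2). Let D ⊂ ℝ^{2n+1} be their convex hull. Then the topological interior of D contains no point of ℤ^{2n+1}. -/
/-!
Every vertex of `D` has `j`-th coordinate `0` or `1`, so `D` has lattice width one in the direction
`eⱼ`. Linear functionals other than `0` are open maps, so the `j`-th coordinate lies strictly
between `0` and `1` on the interior of `D`, where it is therefore never an integer.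
-/

open Set

section Width

variable {E : Type*} [AddCommGroup E] [Module ℝ E] [TopologicalSpace E] [ContinuousAdd E]
  [ContinuousSMul ℝ E] {f : StrongDual ℝ E} {s : Set E}

theorem mapsTo_interior_convexHull_Ioo {a b : ℝ} (hf : f ≠ 0) (hs : MapsTo f s (Icc a b)) :
    MapsTo f (interior (convexHull ℝ s)) (Ioo a b) := by
  have hull_mapsTo : MapsTo f (convexHull ℝ s) (Icc a b) :=
    convexHull_min hs ((convex_Icc a b).linear_preimage f.toLinearMap)
  rw [← interior_Icc]
  exact (f.isOpenMap_of_ne_zero hf).mapsTo_interior hull_mapsTo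

theorem ne_intCast_of_mem_interior_convexHull {k : ℤ} {x : E} (hf : f ≠ 0)
    (hs : MapsTo f s (Icc (k : ℝ) (k + 1))) (hx : x ∈ interior (convexHull ℝ s)) (m : ℤ) :
    f x ≠ m := by
  intro hm
  obtain ⟨hkm, hmk⟩ := hm ▸ mapsTo_interior_convexHull_Ioo hf hs hx
  have hkm' : k < m := by exact_mod_cast hkm
  have hmk' : m < k + 1 := by exact_mod_cast hmk
  omega

end Width

theorem no_interior_lattice_points_general {ι : Type*} [DecidableEq ι] [Nonempty ι] (h : ℝ)
    (x : ι → ℤ) (t : ℝ) :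
    ((fun i => (x i : ℝ)), t) ∉ interior (convexHull ℝ
      ({(0, 0)} ∪ range (fun j : ι => ((Pi.single j 1 : ι → ℝ), (0 : ℝ))) ∪
        {((fun _ => 1 : ι → ℝ), h)})) := by
  obtain ⟨i⟩ := ‹Nonempty ι›
  let coord : StrongDual ℝ ((ι → ℝ) × ℝ) :=
    (ContinuousLinearMap.proj i).comp (ContinuousLinearMap.fst ℝ (ι → ℝ) ℝ)
  have coord_ne_zero : coord ≠ 0 := fun h0 => by
    simpa [coord] using DFunLike.congr_fun h0 ((fun _ => 1), 0)
  refine fun hx => ne_intCast_of_mem_interior_convexHull (k := 0) coord_ne_zero ?_ hx (x i) rfl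
  rintro p ((rfl | ⟨j, rfl⟩) | rfl)
  · simp [coord]
  · obtain rfl | hij := eq_or_ne i j
    · simp [coord]
    · simp [coord, hij]
  · simp [coord]

/-- The toric diagram of `ℝP^{4n+3}`: the convex hull of `0`, `(eⱼ, 0)` for
`j = 1, …, 2n`, and `(e₁ + ⋯ + e_{2n}, 2)` in `ℝ^{2n} × ℝ` contains no lattice point
of `ℤ^{2n} × ℤ` in its interior. -/
theorem no_interior_lattice_points (n : ℕ) (hn : 1 ≤ n)
    (D : Set ((Fin (2 * n) → ℝ) × ℝ))
    (hD : D = convexHull ℝ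
      ({(0, 0)} ∪
        Set.range (fun j : Fin (2 * n) => ((Pi.single j 1 : Fin (2 * n) → ℝ), (0 : ℝ))) ∪
        {((fun _ => 1 : Fin (2 * n) → ℝ), (2 : ℝ))})) :
    ∀ x : (Fin (2 * n) → ℤ) × ℤ,
      ((fun i => (x.1 i : ℝ)), (x.2 : ℝ)) ∉ interior D := by
  have : Nonempty (Fin (2 * n)) := ⟨⟨0, by omega⟩⟩
  exact fun x => hD ▸ no_interior_lattice_points_general 2 x.1 x.2
end

section
/- Let k and p be positive integers and consider the following 4k + 4 points of ℤ²: (0,0), (1,0), (0, 2k+1), (1, 2k+1), and, for each j = 0, 1, …, k−1, the four points (−(k−j)(k+j+1)/2, k−j), (−(k−j)(k+j+1)/2, k+j+1), ((k−j)(k+j+1)/2 + p, k−j), ((k−j)(k+j+1)/2 + p, k+j+1). Then the convex hull of these points in ℝ² has Lebesgue measure (area) equal to 2k + 1 + 2k(k+1)(2k+1)/3 + 2k(p − 1). -/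
open MeasureTheory

/-!
The diagram has two vertices `(a m, m)` and `(b m, m)` at every height `m = 0, …, 2k + 1`. The
forward differences of `a` increase and those of `b` decrease, so the piecewise linear interpolants
of `a` and `b` are respectively convex and concave, and the convex hull is the region between their
graphs. Its area is the integral of the interpolant of `b - a`, a sum of areas of trapezoids. On the
inner rows `b m - a m = m (2k + 1 - m) + p`, while both extreme rows have width `1`.
-/

section LinearInterp

/-- The value at `y` of the affine function through `(i, a i)` and `(i + 1, a (i + 1))`. -/
def chord (a : ℕ → ℝ) (i : ℕ) (y : ℝ) : ℝ := a i + (y - i) * fwdDiff 1 a i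

/-- The piecewise linear function through the points `(n, a n)`, meaningful for `0 ≤ y` only. -/
noncomputable def linearInterp (a : ℕ → ℝ) (y : ℝ) : ℝ := chord a ⌊y⌋₊ y

variable {N m : ℕ} {a b : ℕ → ℝ} {y : ℝ}

theorem chord_eq_convexCombination (a : ℕ → ℝ) (m : ℕ) (y : ℝ) :
    chord a m y = (m + 1 - y) * a m + (y - m) * a (m + 1) := by
  simp only [chord, fwdDiff]; ring

theorem chord_succ_sub_chord (a : ℕ → ℝ) (i : ℕ) (y : ℝ) :
    chord a (i + 1) y - chord a i y = (y - (i + 1)) * (fwdDiff 1 a (i + 1) - fwdDiff 1 a i) := by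
  simp only [chord, fwdDiff]; push_cast; ring

theorem chord_mul_add_mul (a : ℕ → ℝ) (i : ℕ) (x y : ℝ) {s t : ℝ} (hst : s + t = 1) :
    chord a i (s * x + t * y) = s * chord a i x + t * chord a i y := by
  obtain rfl : t = 1 - s := by linarith
  simp only [chord]; ring

theorem continuous_chord (a : ℕ → ℝ) (i : ℕ) : Continuous (chord a i) := by
  unfold chord; fun_prop

theorem linearInterp_natCast (a : ℕ → ℝ) (n : ℕ) : linearInterp a n = a n := by
  simp [linearInterp, chord]

theorem linearInterp_eq_chord (a : ℕ → ℝ) (hy : y ∈ Set.Icc (m : ℝ) (m + 1)) :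
    linearInterp a y = chord a m y := by
  rcases hy.2.lt_or_eq with hlt | rfl
  · rw [linearInterp, (Nat.floor_eq_iff (m.cast_nonneg.trans hy.1)).2 ⟨hy.1, hlt⟩]
  · rw [chord_eq_convexCombination, ← Nat.cast_succ, linearInterp_natCast]
    simp

theorem linearInterp_neg (a : ℕ → ℝ) : linearInterp (-a) = -linearInterp a := by
  ext y; simp only [linearInterp, chord, fwdDiff, Pi.neg_apply]; ring

theorem linearInterp_sub (a b : ℕ → ℝ) :
    linearInterp (a - b) = linearInterp a - linearInterp b := by
  ext y; simp only [linearInterp, chord, fwdDiff, Pi.sub_apply]; ring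

theorem measurable_linearInterp (a : ℕ → ℝ) : Measurable (linearInterp a) := by
  have hcomp (c : ℕ → ℝ) : Measurable fun y : ℝ => c ⌊y⌋₊ :=
    (measurable_from_nat (f := c)).comp Nat.measurable_floor
  exact (hcomp a).add ((measurable_id.sub (hcomp _)).mul (hcomp (fwdDiff 1 a)))

theorem exists_nat_lt_mem_Icc (hN : 0 < N) (hy : y ∈ Set.Icc (0 : ℝ) N) :
    ∃ m < N, y ∈ Set.Icc (m : ℝ) (m + 1) := by
  rcases hy.2.lt_or_eq with hlt | rfl
  · exact ⟨⌊y⌋₊, (Nat.floor_lt hy.1).2 hlt, Nat.floor_le hy.1, (Nat.lt_floor_add_one y).le⟩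
  · have hcast : ((N - 1 : ℕ) : ℝ) = N - 1 := Nat.cast_pred hN
    exact ⟨N - 1, by omega, by linarith, by linarith⟩

theorem linearInterp_nonneg (hN : 0 < N) (ha : ∀ n ≤ N, 0 ≤ a n) (hy : y ∈ Set.Icc (0 : ℝ) N) :
    0 ≤ linearInterp a y := by
  obtain ⟨m, hm, hmy⟩ := exists_nat_lt_mem_Icc hN hy
  rw [linearInterp_eq_chord a hmy, chord_eq_convexCombination]
  exact add_nonneg (mul_nonneg (sub_nonneg.2 hmy.2) (ha m hm.le))
    (mul_nonneg (sub_nonneg.2 hmy.1) (ha (m + 1) hm))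

theorem chord_le_chord (ha : MonotoneOn (fwdDiff 1 a) (Set.Iio N)) (hm : m < N)
    (hy : y ∈ Set.Icc (m : ℝ) (m + 1)) {i : ℕ} (hi : i < N) : chord a i y ≤ chord a m y := by
  have hslope {j : ℕ} (hj : j + 1 < N) : 0 ≤ fwdDiff 1 a (j + 1) - fwdDiff 1 a j :=
    sub_nonneg.2 (ha (Nat.lt_of_succ_lt hj) hj j.le_succ)
  have hmono : MonotoneOn (fun j => chord a j y) (Set.Iic m) := by
    refine monotoneOn_of_le_add_one Set.ordConnected_Iic fun j _ _ hj => sub_nonneg.1 ?_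
    have hjy : (j : ℝ) + 1 ≤ y := le_trans (by exact_mod_cast hj) hy.1
    rw [chord_succ_sub_chord]
    exact mul_nonneg (sub_nonneg.2 hjy) (hslope (lt_of_le_of_lt hj hm))
  have hanti : AntitoneOn (fun j => chord a j y) (Set.Ico m N) := by
    refine antitoneOn_of_add_one_le Set.ordConnected_Ico fun j _ hj hj' => sub_nonpos.1 ?_
    have hyj : y ≤ (j : ℝ) + 1 := hy.2.trans (by exact_mod_cast Nat.succ_le_succ hj.1)
    rw [chord_succ_sub_chord]
    exact mul_nonpos_of_nonpos_of_nonneg (sub_nonpos.2 hyj) (hslope hj'.2)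
  rcases le_total i m with him | hmi
  · exact hmono him Set.self_mem_Iic him
  · exact hanti ⟨le_rfl, hm⟩ ⟨hmi, hi⟩ hmi

theorem chord_le_linearInterp (ha : MonotoneOn (fwdDiff 1 a) (Set.Iio N)) {i : ℕ} (hi : i < N)
    (hy : y ∈ Set.Icc (0 : ℝ) N) : chord a i y ≤ linearInterp a y := by
  obtain ⟨m, hm, hmy⟩ := exists_nat_lt_mem_Icc (Nat.zero_lt_of_lt hi) hy
  exact (chord_le_chord ha hm hmy hi).trans_eq (linearInterp_eq_chord a hmy).symm

theorem convexOn_linearInterp (hN : 0 < N) (ha : MonotoneOn (fwdDiff 1 a) (Set.Iio N)) :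
    ConvexOn ℝ (Set.Icc 0 (N : ℝ)) (linearInterp a) := by
  refine ⟨convex_Icc 0 _, fun x hx y hy s t hs ht hst => ?_⟩
  obtain ⟨m, hm, hmz⟩ := exists_nat_lt_mem_Icc hN (convex_Icc 0 (N : ℝ) hx hy hs ht hst)
  calc linearInterp a (s * x + t * y) = s * chord a m x + t * chord a m y := by
        rw [← chord_mul_add_mul a m x y hst]; exact linearInterp_eq_chord a hmz
    _ ≤ s * linearInterp a x + t * linearInterp a y := by
        have := chord_le_linearInterp ha hm hx
        have := chord_le_linearInterp ha hm hy
        gcongr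

theorem concaveOn_linearInterp (hN : 0 < N) (ha : AntitoneOn (fwdDiff 1 a) (Set.Iio N)) :
    ConcaveOn ℝ (Set.Icc 0 (N : ℝ)) (linearInterp a) := by
  rw [← neg_convexOn_iff, ← linearInterp_neg]
  refine convexOn_linearInterp hN fun i hi j hj hij => ?_
  have := ha hi hj hij
  simp only [fwdDiff, Pi.neg_apply] at this ⊢
  linarith

theorem integral_chord (a : ℕ → ℝ) (m : ℕ) :
    ∫ y in (m : ℝ)..(m + 1), chord a m y = (a m + a (m + 1)) / 2 := by
  simp only [chord]
  rw [intervalIntegral.integral_add intervalIntegrable_const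
    (Continuous.intervalIntegrable (by fun_prop) _ _), intervalIntegral.integral_mul_const,
    intervalIntegral.integral_sub intervalIntegral.intervalIntegrable_id intervalIntegrable_const]
  simp only [intervalIntegral.integral_const, integral_id, smul_eq_mul, fwdDiff]
  ring

theorem integral_linearInterp (a : ℕ → ℝ) (N : ℕ) :
    ∫ y in (0 : ℝ)..N, linearInterp a y = ∑ m ∈ Finset.range N, (a m + a (m + 1)) / 2 := by
  have hEqOn (m : ℕ) : Set.EqOn (chord a m) (linearInterp a) (Set.uIcc (m : ℝ) (m + 1 : ℕ)) := by
    intro y hy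
    rw [Nat.cast_succ, Set.uIcc_of_le (by linarith)] at hy
    exact (linearInterp_eq_chord a hy).symm
  have hint (m : ℕ) : IntervalIntegrable (linearInterp a) volume (m : ℝ) (m + 1 : ℕ) :=
    ((continuous_chord a m).intervalIntegrable _ _).congr
      fun y hy => hEqOn m (Set.uIoc_subset_uIcc hy)
  rw [← Nat.cast_zero,
    ← intervalIntegral.sum_integral_adjacent_intervals (a := fun m : ℕ => (m : ℝ))
      fun m _ => hint m]
  refine Finset.sum_congr rfl fun m _ => ?_
  rw [← intervalIntegral.integral_congr (hEqOn m), Nat.cast_succ, integral_chord]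

end LinearInterp

section HorizontalRegion

/-- The points `![x, y]` with `y ∈ s` and `f y ≤ x ≤ g y`; unlike `regionBetween`, the region is
closed on both sides and its slices are horizontal. -/
def horizontalRegion (f g : ℝ → ℝ) (s : Set ℝ) : Set (Fin 2 → ℝ) :=
  {v | v 1 ∈ s ∧ v 0 ∈ Set.Icc (f (v 1)) (g (v 1))}

variable {f g : ℝ → ℝ} {s : Set ℝ}

theorem convex_horizontalRegion (hf : ConvexOn ℝ s f) (hg : ConcaveOn ℝ s g) :
    Convex ℝ (horizontalRegion f g s) := by
  let swap : (Fin 2 → ℝ) →ₗ[ℝ] ℝ × ℝ := (LinearMap.proj 1).prod (LinearMap.proj 0)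
  have hpreimage : horizontalRegion f g s =
      swap ⁻¹' ({q | q.1 ∈ s ∧ f q.1 ≤ q.2} ∩ {q | q.1 ∈ s ∧ q.2 ≤ g q.1}) :=
    Set.ext fun _ => and_and_left
  rw [hpreimage]
  exact (hf.convex_epigraph.inter hg.convex_hypograph).linear_preimage swap

theorem measurePreserving_apply_one_apply_zero :
    MeasurePreserving (fun v : Fin 2 → ℝ => (v 1, v 0)) :=
  Measure.measurePreserving_swap.comp (volume_preserving_finTwoArrow ℝ)

theorem volume_horizontalRegion (hf : Measurable f) (hg : Measurable g) (hs : MeasurableSet s) :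
    volume (horizontalRegion f g s) = ∫⁻ y in s, ENNReal.ofReal (g y - f y) := by
  have hmeas := measurableSet_region_between_cc hf hg hs
  have hslice (y : ℝ) :
      volume (Prod.mk y ⁻¹' {q : ℝ × ℝ | q.1 ∈ s ∧ q.2 ∈ Set.Icc (f q.1) (g q.1)}) =
        s.indicator (fun y => ENNReal.ofReal (g y - f y)) y := by
    by_cases hy : y ∈ s <;> simp [hy, ← Real.volume_Icc, Set.Icc]
  calc volume (horizontalRegion f g s)
      = volume {q : ℝ × ℝ | q.1 ∈ s ∧ q.2 ∈ Set.Icc (f q.1) (g q.1)} :=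
        measurePreserving_apply_one_apply_zero.measure_preimage hmeas.nullMeasurableSet
    _ = ∫⁻ y, s.indicator (fun y => ENNReal.ofReal (g y - f y)) y := by
        rw [Measure.volume_eq_prod, Measure.prod_apply hmeas]
        exact lintegral_congr hslice
    _ = ∫⁻ y in s, ENNReal.ofReal (g y - f y) := lintegral_indicator hs _

theorem toReal_volume_horizontalRegion (hf : Measurable f) (hg : Measurable g)
    (hs : MeasurableSet s) (hfg : ∀ y ∈ s, f y ≤ g y) :
    (volume (horizontalRegion f g s)).toReal = ∫ y in s, (g y - f y) := by
  rw [volume_horizontalRegion hf hg hs, integral_eq_lintegral_of_nonneg_ae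
    (ae_restrict_of_forall_mem hs fun y hy => sub_nonneg.2 (hfg y hy))
    (hg.sub hf).aestronglyMeasurable]

end HorizontalRegion

section RowEndpoints

/-- The points `![a m, m]` and `![b m, m]` for `m ≤ N`: the two ends of each row of a polygon all of
whose vertices have integral height. -/
def rowEndpoints (N : ℕ) (a b : ℕ → ℝ) : Set (Fin 2 → ℝ) :=
  {v | ∃ m ≤ N, v = ![a m, m] ∨ v = ![b m, m]}

variable {N : ℕ} {a b : ℕ → ℝ}

theorem rowEndpoints_subset_horizontalRegion (hab : ∀ n ≤ N, a n ≤ b n) :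
    rowEndpoints N a b ⊆ horizontalRegion (linearInterp a) (linearInterp b) (Set.Icc 0 N) := by
  rintro v ⟨n, hn, rfl | rfl⟩ <;> simp [horizontalRegion, linearInterp_natCast, hn, hab n hn]

theorem linearInterp_mem_of_convex (hN : 0 < N) {S : Set (Fin 2 → ℝ)} (hS : Convex ℝ S)
    (ha : ∀ n ≤ N, ![a n, (n : ℝ)] ∈ S) {y : ℝ} (hy : y ∈ Set.Icc (0 : ℝ) N) :
    ![linearInterp a y, y] ∈ S := by
  obtain ⟨m, hm, hmy⟩ := exists_nat_lt_mem_Icc hN hy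
  convert hS (ha m hm.le) (ha (m + 1) hm) (sub_nonneg.2 hmy.2) (sub_nonneg.2 hmy.1) (by ring)
    using 1
  rw [linearInterp_eq_chord a hmy, chord_eq_convexCombination]
  ext i
  fin_cases i
  · simp
  · simp; ring

theorem horizontalRegion_subset_of_convex {f g : ℝ → ℝ} {s : Set ℝ} {S : Set (Fin 2 → ℝ)}
    (hS : Convex ℝ S) (hf : ∀ y ∈ s, ![f y, y] ∈ S) (hg : ∀ y ∈ s, ![g y, y] ∈ S) :
    horizontalRegion f g s ⊆ S := by
  rintro v ⟨hy, hx⟩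
  obtain ⟨t, u, ht, hu, htu, hx⟩ := Icc_subset_segment (𝕜 := ℝ) hx
  convert hS (hf _ hy) (hg _ hy) ht hu htu using 1
  ext i
  fin_cases i
  · simpa using hx.symm
  · simp [← add_mul, htu]

theorem convexHull_rowEndpoints (hN : 0 < N) (ha : MonotoneOn (fwdDiff 1 a) (Set.Iio N))
    (hb : AntitoneOn (fwdDiff 1 b) (Set.Iio N)) (hab : ∀ n ≤ N, a n ≤ b n) :
    convexHull ℝ (rowEndpoints N a b) =
      horizontalRegion (linearInterp a) (linearInterp b) (Set.Icc 0 N) := by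
  have hconv := convex_convexHull ℝ (rowEndpoints N a b)
  have hsub := subset_convexHull ℝ (rowEndpoints N a b)
  refine (convexHull_min (rowEndpoints_subset_horizontalRegion hab) (convex_horizontalRegion
    (convexOn_linearInterp hN ha) (concaveOn_linearInterp hN hb))).antisymm
    (horizontalRegion_subset_of_convex hconv (fun y hy => ?_) fun y hy => ?_)
  · exact linearInterp_mem_of_convex hN hconv (fun n hn => hsub ⟨n, hn, .inl rfl⟩) hy
  · exact linearInterp_mem_of_convex hN hconv (fun n hn => hsub ⟨n, hn, .inr rfl⟩) hy

theorem toReal_volume_convexHull_rowEndpoints (hN : 0 < N)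
    (ha : MonotoneOn (fwdDiff 1 a) (Set.Iio N)) (hb : AntitoneOn (fwdDiff 1 b) (Set.Iio N))
    (hab : ∀ n ≤ N, a n ≤ b n) :
    (volume (convexHull ℝ (rowEndpoints N a b))).toReal =
      ∑ m ∈ Finset.range N, ((b - a) m + (b - a) (m + 1)) / 2 := by
  have hle : ∀ y ∈ Set.Icc (0 : ℝ) N, linearInterp a y ≤ linearInterp b y := fun y hy => by
    have := linearInterp_nonneg hN (a := b - a) (fun n hn => sub_nonneg.2 (hab n hn)) hy
    rwa [linearInterp_sub, Pi.sub_apply, sub_nonneg] at this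
  rw [convexHull_rowEndpoints hN ha hb hab, toReal_volume_horizontalRegion
    (measurable_linearInterp a) (measurable_linearInterp b) measurableSet_Icc hle,
    integral_Icc_eq_integral_Ioc, ← intervalIntegral.integral_of_le N.cast_nonneg,
    ← integral_linearInterp, linearInterp_sub]
  rfl

end RowEndpoints

section Diagram

/-- The horizontal distance from the line `x = 0` to the left vertex of the diagram at height
`m`. -/
noncomputable def bulge (k m : ℕ) : ℝ := m * (2 * k + 1 - m) / 2

/-- The abscissa of the right vertex of the diagram at height `m`. -/
noncomputable def rightVertex (k : ℕ) (p : ℝ) (m : ℕ) : ℝ :=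
  bulge k m + if m = 0 ∨ m = 2 * k + 1 then 1 else p

/-- The points spanning the toric diagram of `(#_{4k+1} S² × S³, ξ_p)`, for an arbitrary real
parameter `p`. -/
def diagramVertices (k : ℕ) (p : ℝ) : Set (Fin 2 → ℝ) :=
  ({![0, 0], ![1, 0], ![0, 2 * (k : ℝ) + 1], ![1, 2 * (k : ℝ) + 1]} : Set (Fin 2 → ℝ)) ∪
    ⋃ j ∈ Finset.range k,
      ({![-(((k : ℝ) - (j : ℝ)) * ((k : ℝ) + (j : ℝ) + 1) / 2), (k : ℝ) - (j : ℝ)],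
        ![-(((k : ℝ) - (j : ℝ)) * ((k : ℝ) + (j : ℝ) + 1) / 2), (k : ℝ) + (j : ℝ) + 1],
        ![((k : ℝ) - (j : ℝ)) * ((k : ℝ) + (j : ℝ) + 1) / 2 + p, (k : ℝ) - (j : ℝ)],
        ![((k : ℝ) - (j : ℝ)) * ((k : ℝ) + (j : ℝ) + 1) / 2 + p, (k : ℝ) + (j : ℝ) + 1]} :
        Set (Fin 2 → ℝ))

variable {k m : ℕ} {p : ℝ}

theorem bulge_zero (k : ℕ) : bulge k 0 = 0 := by simp [bulge]

theorem bulge_two_mul_add_one (k : ℕ) : bulge k (2 * k + 1) = 0 := by simp [bulge]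

theorem bulge_sub {j : ℕ} (hj : j ≤ k) : bulge k (k - j) = ((k : ℝ) - j) * (k + j + 1) / 2 := by
  rw [bulge, Nat.cast_sub hj]; ring

theorem bulge_add_add_one (k j : ℕ) : bulge k (k + j + 1) = ((k : ℝ) - j) * (k + j + 1) / 2 := by
  rw [bulge]; push_cast; ring

theorem bulge_nonneg (hm : m ≤ 2 * k + 1) : 0 ≤ bulge k m := by
  have hm' : (m : ℝ) ≤ 2 * k + 1 := by exact_mod_cast hm
  exact div_nonneg (mul_nonneg m.cast_nonneg (sub_nonneg.2 hm')) zero_le_two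

theorem fwdDiff_neg_bulge (k m : ℕ) : fwdDiff 1 (-bulge k) m = m - k := by
  simp only [fwdDiff, Pi.neg_apply, bulge]; push_cast; ring

theorem rightVertex_zero (k : ℕ) (p : ℝ) : rightVertex k p 0 = 1 := by
  simp [rightVertex, bulge_zero]

theorem rightVertex_two_mul_add_one (k : ℕ) (p : ℝ) : rightVertex k p (2 * k + 1) = 1 := by
  simp [rightVertex, bulge_two_mul_add_one]

theorem rightVertex_of_pos_of_le (hm : 0 < m) (hmk : m ≤ 2 * k) :
    rightVertex k p m = bulge k m + p :=
  congrArg (bulge k m + ·) (if_neg (by omega))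

theorem rightVertex_le (hp : 0 ≤ p) : rightVertex k p m ≤ bulge k m + p + 1 := by
  unfold rightVertex
  split_ifs <;> linarith

theorem neg_bulge_le_rightVertex (hp : 0 ≤ p) (hm : m ≤ 2 * k + 1) :
    (-bulge k) m ≤ rightVertex k p m := by
  have := bulge_nonneg hm
  simp only [Pi.neg_apply, rightVertex]
  split_ifs <;> linarith

theorem monotone_fwdDiff_neg_bulge (k : ℕ) : Monotone (fwdDiff 1 (-bulge k)) := by
  intro i j hij
  simp only [fwdDiff_neg_bulge]
  gcongr

theorem antitoneOn_fwdDiff_rightVertex (k : ℕ) (hp : 0 ≤ p) :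
    AntitoneOn (fwdDiff 1 (rightVertex k p)) (Set.Iio (2 * k + 1)) := by
  refine antitoneOn_of_add_one_le Set.ordConnected_Iio fun i _ _ hi => ?_
  have hi : i + 1 < 2 * k + 1 := hi
  have hmid : rightVertex k p (i + 1) = bulge k (i + 1) + p :=
    rightVertex_of_pos_of_le i.succ_pos (Nat.le_of_lt_succ hi)
  have hbulge : bulge k i + bulge k (i + 2) = 2 * bulge k (i + 1) - 1 := by
    simp only [bulge]; push_cast; ring
  -- At most one of the rows `i` and `i + 2` is extreme, because `2 k + 1 ≠ 2`.
  have hends : rightVertex k p i + rightVertex k p (i + 2) ≤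
      bulge k i + bulge k (i + 2) + 2 * p + 1 := by
    rcases (by omega : i ≠ 0 ∨ i + 2 ≠ 2 * k + 1) with hi₀ | hi₂
    · have := rightVertex_le (k := k) (m := i + 2) hp
      rw [rightVertex_of_pos_of_le (Nat.pos_of_ne_zero hi₀) (by omega)]
      linarith
    · have := rightVertex_le (k := k) (m := i) hp
      rw [rightVertex_of_pos_of_le (m := i + 2) (by omega) (by omega)]
      linarith
  calc rightVertex k p (i + 2) - rightVertex k p (i + 1)
      ≤ 2 * rightVertex k p (i + 1) - rightVertex k p i - rightVertex k p (i + 1) := by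
        rw [hmid]; linarith
    _ = rightVertex k p (i + 1) - rightVertex k p i := by ring

theorem rowEndpoints_subset_diagramVertices (k : ℕ) (p : ℝ) :
    rowEndpoints (2 * k + 1) (-bulge k) (rightVertex k p) ⊆ diagramVertices k p := by
  rintro v ⟨m, hm, hv⟩
  simp only [diagramVertices, Set.mem_union, Set.mem_iUnion, Finset.mem_range, exists_prop]
  rcases Nat.eq_zero_or_pos m with rfl | hm₀
  · left
    rcases hv with rfl | rfl <;> simp [bulge_zero, rightVertex_zero]
  rcases hm.eq_or_lt with rfl | hmN
  · left
    rcases hv with rfl | rfl <;> simp [bulge_two_mul_add_one, rightVertex_two_mul_add_one]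
  right
  rw [rightVertex_of_pos_of_le hm₀ (Nat.le_of_lt_succ hmN), Pi.neg_apply] at hv
  rcases le_or_gt m k with hmk | hkm
  · obtain ⟨j, hj, rfl⟩ : ∃ j < k, m = k - j := ⟨k - m, by omega, by omega⟩
    rw [bulge_sub hj.le, Nat.cast_sub hj.le] at hv
    exact ⟨j, hj, by rcases hv with rfl | rfl <;> simp⟩
  · obtain ⟨j, hj, rfl⟩ : ∃ j < k, m = k + j + 1 := ⟨m - k - 1, by omega, by omega⟩
    rw [bulge_add_add_one] at hv
    exact ⟨j, hj, by rcases hv with rfl | rfl <;> simp⟩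

theorem diagramVertices_subset_rowEndpoints (k : ℕ) (p : ℝ) :
    diagramVertices k p ⊆ rowEndpoints (2 * k + 1) (-bulge k) (rightVertex k p) := by
  refine Set.union_subset ?_ (Set.iUnion₂_subset fun j hj => ?_)
  · rintro v (rfl | rfl | rfl | rfl)
    · exact ⟨0, by omega, .inl (by simp [bulge_zero])⟩
    · exact ⟨0, by omega, .inr (by simp [rightVertex_zero])⟩
    · exact ⟨2 * k + 1, le_rfl, .inl (by simp [bulge_two_mul_add_one])⟩
    · exact ⟨2 * k + 1, le_rfl, .inr (by simp [rightVertex_two_mul_add_one])⟩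
  · have hjk : j < k := Finset.mem_range.1 hj
    have hlow : rightVertex k p (k - j) = ((k : ℝ) - j) * (k + j + 1) / 2 + p := by
      rw [rightVertex_of_pos_of_le (by omega) (by omega), bulge_sub hjk.le]
    have hhigh : rightVertex k p (k + j + 1) = ((k : ℝ) - j) * (k + j + 1) / 2 + p := by
      rw [rightVertex_of_pos_of_le (by omega) (by omega), bulge_add_add_one]
    rintro v (rfl | rfl | rfl | rfl)
    · exact ⟨k - j, by omega, .inl (by simp [bulge_sub hjk.le, Nat.cast_sub hjk.le])⟩
    · exact ⟨k + j + 1, by omega, .inl (by simp [bulge_add_add_one])⟩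
    · exact ⟨k - j, by omega, .inr (by simp [hlow, Nat.cast_sub hjk.le])⟩
    · exact ⟨k + j + 1, by omega, .inr (by simp [hhigh])⟩

theorem diagramVertices_eq_rowEndpoints (k : ℕ) (p : ℝ) :
    diagramVertices k p = rowEndpoints (2 * k + 1) (-bulge k) (rightVertex k p) :=
  (diagramVertices_subset_rowEndpoints k p).antisymm (rowEndpoints_subset_diagramVertices k p)

theorem sum_range_bulge (k n : ℕ) :
    ∑ m ∈ Finset.range n, bulge k (m + 1) = n * (n + 1) * (3 * k + 1 - n) / 6 := by
  induction n with
  | zero => simp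
  | succ n ih => rw [Finset.sum_range_succ, ih, bulge]; push_cast; ring

theorem sum_range_trapezoid (w : ℕ → ℝ) (n : ℕ) :
    ∑ m ∈ Finset.range (n + 1), (w m + w (m + 1)) / 2 =
      (w 0 + w (n + 1)) / 2 + ∑ m ∈ Finset.range n, w (m + 1) := by
  induction n with
  | zero => simp
  | succ n ih => rw [Finset.sum_range_succ, ih, Finset.sum_range_succ]; ring

theorem sum_range_width (k : ℕ) (p : ℝ) :
    ∑ m ∈ Finset.range (2 * k), (rightVertex k p - -bulge k) (m + 1) =
      2 * (k : ℝ) * (k + 1) * (2 * k + 1) / 3 + 2 * k * p := by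
  have hwidth : ∀ m ∈ Finset.range (2 * k),
      (rightVertex k p - -bulge k) (m + 1) = 2 * bulge k (m + 1) + p := fun m hm => by
    rw [Pi.sub_apply, rightVertex_of_pos_of_le m.succ_pos (Finset.mem_range.1 hm), Pi.neg_apply]
    ring
  rw [Finset.sum_congr rfl hwidth, Finset.sum_add_distrib, ← Finset.mul_sum, sum_range_bulge,
    Finset.sum_const, Finset.card_range, nsmul_eq_mul]
  push_cast
  ring

end Diagram

theorem area_diagram_4k4gon_general (k : ℕ) {p : ℝ} (hp : 0 ≤ p) :
    (volume (convexHull ℝ (diagramVertices k p))).toReal =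
      2 * (k : ℝ) + 1 + 2 * k * (k + 1) * (2 * k + 1) / 3 + 2 * k * (p - 1) := by
  rw [diagramVertices_eq_rowEndpoints, toReal_volume_convexHull_rowEndpoints (2 * k).succ_pos
    ((monotone_fwdDiff_neg_bulge k).monotoneOn _) (antitoneOn_fwdDiff_rightVertex k hp)
    (fun m hm => neg_bulge_le_rightVertex hp hm), sum_range_trapezoid, sum_range_width]
  simp only [Pi.sub_apply, Pi.neg_apply, rightVertex_zero, rightVertex_two_mul_add_one, bulge_zero,
    bulge_two_mul_add_one]
  ring

/-- The `(4k+4)`-gon toric diagram of `(#_{4k+1} S² × S³, ξ_p)` has area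
`2k + 1 + 2k(k+1)(2k+1)/3 + 2k(p-1)`. -/
theorem area_diagram_4k4gon (k p : ℕ) (hk : 1 ≤ k) (hp : 1 ≤ p) :
    (volume (convexHull ℝ
      (({![0, 0], ![1, 0], ![0, 2 * (k : ℝ) + 1], ![1, 2 * (k : ℝ) + 1]} :
          Set (Fin 2 → ℝ)) ∪
        ⋃ j ∈ Finset.range k,
          ({![-(((k : ℝ) - (j : ℝ)) * ((k : ℝ) + (j : ℝ) + 1) / 2), (k : ℝ) - (j : ℝ)],
            ![-(((k : ℝ) - (j : ℝ)) * ((k : ℝ) + (j : ℝ) + 1) / 2),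
              (k : ℝ) + (j : ℝ) + 1],
            ![((k : ℝ) - (j : ℝ)) * ((k : ℝ) + (j : ℝ) + 1) / 2 + (p : ℝ),
              (k : ℝ) - (j : ℝ)],
            ![((k : ℝ) - (j : ℝ)) * ((k : ℝ) + (j : ℝ) + 1) / 2 + (p : ℝ),
              (k : ℝ) + (j : ℝ) + 1]} : Set (Fin 2 → ℝ))))).toReal =
    2 * (k : ℝ) + 1 + 2 * k * (k + 1) * (2 * k + 1) / 3 + 2 * k * ((p : ℝ) - 1) :=
  area_diagram_4k4gon_general k p.cast_nonneg
end
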